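/- arXiv:2112.13741 — 7 statements merged into one kernel-verified Lean document; each statement's English description precedes it below -/
import Mathlib

section
/- Let G be any group and let W = G ≀ ℤ be the restricted wreath product. Then W is boundedly acyclic. -/
open scoped BigOperators

/-- A cochain (function into a normed space) is bounded if its norms are uniformly bounded. -/
def IsBddCochain {G : Type*} {E : Type*} [NormedAddCommGroup E] {n : ℕ}
    (f : (Fin n → G) → E) : Prop :=
  ∃ C : ℝ, ∀ g, ‖f g‖ ≤ C

/-- The inhomogeneous coboundary operator of bounded cohomology, for an action `π` of
`G` on `E`:
`(δf)(g₁,…,g_{n+1}) = g₁•f(g₂,…,g_{n+1}) + ∑_{i=1}^{n} (−1)^i f(g₁,…,g_i·g_{i+1},…,g_{n+1})`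
`+ (−1)^{n+1} f(g₁,…,g_n)`. -/
def bddDelta {G : Type*} [Group G] {E : Type*} [NormedAddCommGroup E] [Module ℝ E]
    (π : G → E → E) (n : ℕ) (f : (Fin n → G) → E) : (Fin (n + 1) → G) → E :=
  fun g =>
    π (g 0) (f (fun j => g j.succ)) +
    (∑ i : Fin n, ((-1 : ℝ) ^ ((i : ℕ) + 1)) •
      f (fun j => if (j : ℕ) < (i : ℕ) then g (Fin.castSucc j)
        else if (j : ℕ) = (i : ℕ) then g (Fin.castSucc j) * g j.succ
        else g j.succ)) +
    ((-1 : ℝ) ^ (n + 1)) • f (fun j => g (Fin.castSucc j))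

/-- Vanishing of the bounded cohomology `Hb^n(G,E)` for all `n ≥ 1`, with respect to the
`G`-action `π` on `E`: every bounded cocycle of degree `n ≥ 1` is the coboundary of a
bounded cochain. -/
def HbVanish {G : Type*} [Group G] {E : Type*} [NormedAddCommGroup E] [Module ℝ E]
    (π : G → E → E) : Prop :=
  ∀ (n : ℕ) (f : (Fin (n + 1) → G) → E), IsBddCochain f →
    bddDelta π (n + 1) f = 0 →
    ∃ b : (Fin n → G) → E, IsBddCochain b ∧ bddDelta π n b = f

/-- A group is boundedly acyclic if `Hb^n(G,ℝ) = 0` for all `n ≥ 1`, where `ℝ` carries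
the trivial `G`-action. -/
def BoundedlyAcyclic (G : Type*) [Group G] : Prop :=
  HbVanish (G := G) (E := ℝ) (fun _ v => v)

/-- The restricted product of copies of `G` indexed by `ι`: finitely supported
functions `ι → G` under pointwise multiplication. -/
def finSupp (ι : Type*) (G : Type*) [Group G] : Subgroup (ι → G) where
  carrier := {f | (Function.mulSupport f).Finite}
  mul_mem' := by
    intro a b ha hb
    exact Set.Finite.subset (ha.union hb) (Function.mulSupport_mul a b)
  one_mem' := by simp [Function.mulSupport_one]
  inv_mem' := by
    intro a ha
    simpa [Function.mulSupport_inv] using ha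

/-- The shift action of `ℤ` (written multiplicatively) on the restricted product
`⊕_ℤ G`: `(k • f) n = f (n - k)`. -/
def shiftHom (G : Type*) [Group G] :
    Multiplicative ℤ →* MulAut (finSupp ℤ G) where
  toFun k :=
    { toFun := fun f => ⟨fun n => (f : ℤ → G) (n - k.toAdd),
        Set.Finite.preimage (Set.injOn_of_injective
          (fun a b hab => by omega)) f.2⟩
      invFun := fun f => ⟨fun n => (f : ℤ → G) (n + k.toAdd),
        Set.Finite.preimage (Set.injOn_of_injective
          (fun a b hab => by omega)) f.2⟩
      left_inv := by
        intro f; ext n; simp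
      right_inv := by
        intro f; ext n; simp
      map_mul' := by
        intro f g; rfl }
  map_one' := by
    ext f n; simp
  map_mul' := by
    intro k l
    ext f n
    show (f : ℤ → G) (n - (k.toAdd + l.toAdd)) = (f : ℤ → G) (n - k.toAdd - l.toAdd)
    rw [sub_add_eq_sub_sub]

/-- The restricted wreath product `W = G ≀ ℤ = (⊕_ℤ G) ⋊ ℤ`. -/
abbrev WreathZ (G : Type*) [Group G] :=
  SemidirectProduct (finSupp ℤ G) (Multiplicative ℤ) (shiftHom G)

universe u

noncomputable section PartA

set_option linter.unusedSectionVars false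
set_option linter.unusedVariables false

variable {W : Type*} [Group W]

/-- Homogeneous differential. -/
def hd (n : ℕ) : ((Fin n → W) → ℝ) →ₗ[ℝ] ((Fin (n + 1) → W) → ℝ) where
  toFun f := fun w => ∑ i : Fin (n + 1), (-1 : ℝ) ^ (i : ℕ) * f (fun j => w (i.succAbove j))
  map_add' f g := by
    ext w; simp [mul_add, Finset.sum_add_distrib]
  map_smul' c f := by
    ext w; simp only [Pi.smul_apply, smul_eq_mul, RingHom.id_apply, Finset.mul_sum]
    exact Finset.sum_congr rfl fun i _ => by ring

/-- Cone operator. -/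
def hK (n : ℕ) (c : W) : ((Fin (n + 1) → W) → ℝ) →ₗ[ℝ] ((Fin n → W) → ℝ) where
  toFun f := fun v => f (Fin.cons c v)
  map_add' f g := rfl
  map_smul' c f := rfl

/-- Translation operator. -/
def hT (n : ℕ) (g : W) : ((Fin n → W) → ℝ) →ₗ[ℝ] ((Fin n → W) → ℝ) where
  toFun f := fun v => f (fun i => g * v i)
  map_add' f g := rfl
  map_smul' c f := rfl

/-- Averaging operator. -/
def hPhi {Ω : Type*} [Fintype Ω] (U : Ω → W) (n : ℕ) :
    ((Fin n → W) → ℝ) →ₗ[ℝ] ((Fin n → W) → ℝ) where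
  toFun f := fun v => (Fintype.card (Fin n → Ω) : ℝ)⁻¹ *
    ∑ ω : Fin n → Ω, f (fun i => v i * U (ω i))
  map_add' f g := by
    ext w; simp [mul_add, Finset.sum_add_distrib]
  map_smul' c f := by
    ext w; simp only [Pi.smul_apply, smul_eq_mul, RingHom.id_apply, ← Finset.mul_sum]
    ring

/-- The homotopy. -/
def hH {Ω : Type*} [Fintype Ω] (U : Ω → W) : (n : ℕ) →
    (((Fin (n + 1) → W) → ℝ) →ₗ[ℝ] ((Fin n → W) → ℝ))
  | 0 => 0
  | n + 1 =>
    { toFun := fun f w => hPhi U (n + 1) (hK (n + 1) (w 0) f) w - hK (n + 1) (w 0) f w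
        - hd n (hH U n (hK (n + 1) (w 0) f)) w
      map_add' := by
        intro f g; ext w; simp only [map_add, Pi.add_apply]; ring
      map_smul' := by
        intro c f; ext w
        simp only [map_smul, Pi.smul_apply, RingHom.id_apply, smul_eq_mul]; ring }

theorem hK_hd (n : ℕ) (c : W) (f : (Fin (n + 1) → W) → ℝ) :
    hK (n + 1) c (hd (n + 1) f) = f - hd n (hK n c f) := by
  ext v
  simp only [hK, hd, LinearMap.coe_mk, AddHom.coe_mk, Pi.sub_apply]
  rw [Fin.sum_univ_succ, sub_eq_add_neg, ← Finset.sum_neg_distrib]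
  congr 1
  · simp
  · refine Finset.sum_congr rfl fun i _ => ?_
    have : (fun j => (Fin.cons c v : Fin (n + 2) → W) (i.succ.succAbove j))
        = Fin.cons c (fun j => v (i.succAbove j)) := by
      funext j
      refine Fin.cases ?_ (fun j => ?_) j
      · simp
      · simp
    rw [this]
    simp [pow_succ]

theorem hK_ext {n : ℕ} {f g : (Fin (n + 1) → W) → ℝ} (h : ∀ c, hK n c f = hK n c g) : f = g := by
  ext w
  have := congrFun (h (w 0)) (fun i => w i.succ)
  simp only [hK, LinearMap.coe_mk, AddHom.coe_mk] at this
  have e : (Fin.cons (w 0) (fun i => w i.succ) : Fin (n + 1) → W) = w := Fin.cons_self_tail w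
  rwa [e] at this

theorem hd_hd (n : ℕ) (f : (Fin n → W) → ℝ) : hd (n + 1) (hd n f) = 0 := by
  induction n with
  | zero =>
    ext w
    simp only [hd, LinearMap.coe_mk, AddHom.coe_mk, Pi.zero_apply]
    simp [Fin.sum_univ_succ]
  | succ n ih =>
    refine hK_ext fun c => ?_
    rw [hK_hd, hK_hd, map_sub, ih, map_zero]; simp

theorem hd_hPhi {Ω : Type*} [Fintype Ω] [Nonempty Ω] (U : Ω → W) (n : ℕ)
    (f : (Fin n → W) → ℝ) : hd n (hPhi U n f) = hPhi U (n + 1) (hd n f) := by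
  ext w
  simp only [hd, hPhi, LinearMap.coe_mk, AddHom.coe_mk]
  rw [Finset.sum_comm, Finset.mul_sum]
  refine Finset.sum_congr rfl fun i _ => ?_
  rw [← Finset.mul_sum, mul_left_comm]
  have : ∑ ω : Fin (n + 1) → Ω, f (fun j => w (i.succAbove j) * U (ω (i.succAbove j)))
      = (Fintype.card Ω : ℝ) * ∑ ω : Fin n → Ω, f (fun j => w (i.succAbove j) * U (ω j)) := by
    rw [← (Fin.insertNthEquiv (fun _ => Ω) i).sum_comp, Fintype.sum_prod_type]
    simp [Finset.card_univ]
  rw [this]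
  have h : (Fintype.card Ω : ℝ) ≠ 0 := by simp
  simp [pow_succ]
  field_simp

theorem hH_homotopy {Ω : Type*} [Fintype Ω] [Nonempty Ω] (U : Ω → W) (n : ℕ)
    (f : (Fin (n + 1) → W) → ℝ) :
    hd n (hH U n f) + hH U (n + 1) (hd (n + 1) f) = hPhi U (n + 1) f - f := by
  induction n with
  | zero =>
    ext w
    simp only [hH, Pi.add_apply, LinearMap.coe_mk, AddHom.coe_mk, LinearMap.zero_apply, map_zero,
      hK_hd, map_sub, Pi.sub_apply, Pi.zero_apply, ← hd_hPhi]
    have : hPhi U 0 (hK 0 (w 0) f) = hK 0 (w 0) f := by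
      ext v
      simp only [hPhi, LinearMap.coe_mk, AddHom.coe_mk]
      simp
      exact congrArg _ (Subsingleton.elim _ _)
    rw [this]; ring
  | succ n ih =>
    ext w
    have h1 : ∀ F, hH U (n + 1 + 1) F w = hPhi U (n + 2) (hK (n + 2) (w 0) F) w
      - hK (n + 2) (w 0) F w - hd (n + 1) (hH U (n + 1) (hK (n + 2) (w 0) F)) w := fun F => rfl
    have h2 := ih (hK (n + 1) (w 0) f)
    have h3 := eq_sub_of_add_eq' h2
    rw [Pi.add_apply, h1, hK_hd, map_sub, map_sub (hH U (n + 1)), h3]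
    simp only [map_sub, Pi.sub_apply, hd_hd, ← hd_hPhi, Pi.zero_apply]
    ring

theorem hd_hT (n : ℕ) (g : W) (f : (Fin n → W) → ℝ) : hd n (hT n g f) = hT (n + 1) g (hd n f) := rfl

theorem hPhi_hT {Ω : Type*} [Fintype Ω] (U : Ω → W) (n : ℕ) (g : W) (f : (Fin n → W) → ℝ) :
    hPhi U n (hT n g f) = hT n g (hPhi U n f) := by
  ext v; simp [hPhi, hT, mul_assoc]

theorem hH_hT {Ω : Type*} [Fintype Ω] (U : Ω → W) (n : ℕ) (g : W) (f : (Fin (n + 1) → W) → ℝ) :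
    hH U n (hT (n + 1) g f) = hT n g (hH U n f) := by
  induction n with
  | zero => simp [hH]
  | succ n ih =>
    ext w
    have h1 : ∀ F v, hH U (n + 1) F v = hPhi U (n + 1) (hK (n + 1) (v 0) F) v
      - hK (n + 1) (v 0) F v - hd n (hH U n (hK (n + 1) (v 0) F)) v := fun F v => rfl
    have h2 : hK (n + 1) (w 0) (hT (n + 1 + 1) g f) = hT (n + 1) g (hK (n + 1) (g * w 0) f) := by
      ext v
      simp only [hK, hT, LinearMap.coe_mk, AddHom.coe_mk]
      congr 1
      funext i
      refine Fin.cases ?_ (fun j => ?_) i <;> simp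
    have h3 : ∀ F : (Fin (n + 1) → W) → ℝ, hT (n + 1) g F w = F (fun i => g * w i) := fun F => rfl
    rw [h3, h1, h1, h2, ih, hd_hT, hPhi_hT, h3, h3, h3]

theorem hd_bound (n : ℕ) (f : (Fin n → W) → ℝ) (C : ℝ) (h : ∀ w, |f w| ≤ C) (w) :
    |hd n f w| ≤ (n + 1) * C := by
  simp only [hd, LinearMap.coe_mk, AddHom.coe_mk]
  refine (Finset.abs_sum_le_sum_abs _ _).trans ?_
  refine (Finset.sum_le_sum (g := fun _ => C) fun i _ => ?_).trans ?_
  · rw [abs_mul, abs_pow, abs_neg, abs_one, one_pow, one_mul]; exact h _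
  · simp

theorem hPhi_bound {Ω : Type*} [Fintype Ω] [Nonempty Ω] (U : Ω → W) (n : ℕ) (f : (Fin n → W) → ℝ)
    (C : ℝ) (h : ∀ w, |f w| ≤ C) (w) : |hPhi U n f w| ≤ C := by
  simp only [hPhi, LinearMap.coe_mk, AddHom.coe_mk]
  have hp : (0 : ℝ) < Fintype.card (Fin n → Ω) := by exact_mod_cast Fintype.card_pos
  rw [abs_mul, abs_of_pos (inv_pos.2 hp), inv_mul_le_iff₀ hp]
  refine (Finset.abs_sum_le_sum_abs _ _).trans ?_
  refine (Finset.sum_le_sum (g := fun _ => C) fun i _ => h _).trans ?_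
  simp [Finset.card_univ]

theorem hH_bound (n : ℕ) : ∃ c : ℝ, 0 ≤ c ∧ ∀ (Ω : Type*) [Fintype Ω] [Nonempty Ω] (U : Ω → W)
    (f : (Fin (n + 1) → W) → ℝ) (C : ℝ), (∀ w, |f w| ≤ C) → ∀ w, |hH U n f w| ≤ c * C := by
  induction n with
  | zero => exact ⟨0, le_rfl, fun Ω _ _ U f C h w => by simp [hH]⟩
  | succ n ih =>
    obtain ⟨c, hc, ih⟩ := ih
    refine ⟨1 + 1 + (n + 1) * c, by positivity, fun Ω _ _ U f C h w => ?_⟩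
    have h1 : hH U (n + 1) f w = hPhi U (n + 1) (hK (n + 1) (w 0) f) w
      - hK (n + 1) (w 0) f w - hd n (hH U n (hK (n + 1) (w 0) f)) w := rfl
    have hk : ∀ v, |hK (n + 1) (w 0) f v| ≤ C := fun v => h _
    have a1 := hPhi_bound U (n + 1) _ C hk w
    have a2 := hk w
    have a3 := hd_bound n _ _ (ih Ω U _ C hk) w
    rw [h1]
    have := abs_sub (hPhi U (n + 1) (hK (n + 1) (w 0) f) w - hK (n + 1) (w 0) f w)
      (hd n (hH U n (hK (n + 1) (w 0) f)) w)
    have := abs_sub (hPhi U (n + 1) (hK (n + 1) (w 0) f) w) (hK (n + 1) (w 0) f w)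
    nlinarith

/-- successive quotients -/
def hdiff {n : ℕ} (w : Fin (n + 1) → W) : Fin n → W := fun j => (w j.castSucc)⁻¹ * w j.succ

theorem hd_hdiff (n : ℕ) (f : (Fin n → W) → ℝ) (w : Fin (n + 2) → W) :
    hd (n + 1) (fun v => f (hdiff v)) w = bddDelta (fun _ v => v) n f (hdiff w) := by
  simp only [hd, bddDelta, LinearMap.coe_mk, AddHom.coe_mk, smul_eq_mul]
  rw [Fin.sum_univ_succ, Fin.sum_univ_castSucc, ← add_assoc]
  congr 1
  · congr 1
    · simp only [Fin.val_zero, pow_zero, one_mul]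
      congr 1
    · refine Finset.sum_congr rfl fun i _ => ?_
      congr 1
      congr 1
      funext j
      simp only [hdiff]
      rcases lt_trichotomy (j : ℕ) i with h | h | h
      · rw [if_pos h]
        congr 2
        · congr 1
          rw [Fin.succAbove_of_castSucc_lt _ _ (by rw [Fin.lt_def]; simp; omega)]
        · rw [Fin.succAbove_of_castSucc_lt _ _ (by rw [Fin.lt_def]; simp; omega)]
          rfl
      · rw [if_neg (by omega), if_pos h]
        rw [Fin.succAbove_of_castSucc_lt _ _ (by rw [Fin.lt_def]; simp; omega),
          Fin.succAbove_of_le_castSucc _ _ (by rw [Fin.le_def]; simp; omega)]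
        have : j.succ.castSucc = j.castSucc.succ := rfl
        rw [this]; group
      · rw [if_neg (by omega), if_neg (by omega)]
        rw [Fin.succAbove_of_le_castSucc _ _ (by rw [Fin.le_def]; simp; omega),
          Fin.succAbove_of_le_castSucc _ _ (by rw [Fin.le_def]; simp; omega)]
        rfl
  · congr 1
    simp only [Fin.succ_last, Fin.succAbove_last]
    congr 1

/-- The averaging property. -/
def AvgProp (W : Type u) [Group W] : Prop :=
  ∀ (n : ℕ) (S : Finset (Fin n → W)) (ε : ℝ), 0 < ε →
    ∃ (Ω : Type u) (_ : Fintype Ω) (_ : Nonempty Ω) (U : Ω → W),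
      ∀ f : (Fin n → W) → ℝ, (∀ w, |f w| ≤ 1) → (∀ g w, f (fun i => g * w i) = f w) →
        ∀ w ∈ S, |hPhi U n f w - hPhi U n f (fun _ => 1)| ≤ ε

theorem hd_const (n : ℕ) (c : ℝ) (w : Fin (n + 1) → W) :
    hd n (fun _ => c) w = if Even n then c else 0 := by
  simp only [hd, LinearMap.coe_mk, AddHom.coe_mk]
  rw [← Finset.sum_mul, Fin.sum_univ_eq_sum_range (fun i => (-1 : ℝ) ^ i), neg_one_geom_sum]
  by_cases h : Even n <;> simp [h, Nat.even_add_one]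

theorem ultra_lim {ι : Type*} (u : Ultrafilter ι) (x : ι → ℝ) (C : ℝ) (h : ∀ i, |x i| ≤ C) :
    ∃ l, |l| ≤ C ∧ Filter.Tendsto x u (nhds l) := by
  have := (isCompact_Icc (a := -C) (b := C)).ultrafilter_le_nhds (u.map x) (by
    simp only [Filter.le_principal_iff, Ultrafilter.coe_map, Filter.mem_map]
    exact Filter.univ_mem' fun i => abs_le.1 (h i))
  obtain ⟨l, hl, hh⟩ := this
  exact ⟨l, abs_le.2 hl, hh⟩

theorem boundedlyAcyclic_of_avgProp (W : Type u) [Group W] (hW : AvgProp W) :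
    BoundedlyAcyclic W := by
  classical
  intro n f ⟨C, hC⟩ hf
  set F : (Fin (n + 2) → W) → ℝ := fun v => f (hdiff v) with hF
  -- normalise
  have hC0 : ∀ g, |f g| ≤ max C 1 := fun g => (hC g).trans (le_max_left _ _)
  set D := max C 1 with hD
  have hDpos : 0 < D := lt_of_lt_of_le one_pos (le_max_right _ _)
  have hFD : ∀ w, |F w| ≤ D := fun w => hC0 _
  have hFinv : ∀ g w, F (fun i => g * w i) = F w := by
    intro g w; simp only [hF]; congr 1; funext j; simp only [hdiff]; group
  have hFc : hd (n + 2) F = 0 := by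
    ext w; rw [hF, hd_hdiff, hf]; rfl
  obtain ⟨c, hc, hb⟩ := hH_bound (W := W) (n + 1)
  let ι := Finset (Fin (n + 2) → W) × ℕ
  have key : ∀ i : ι, ∃ (b : (Fin (n + 1) → W) → ℝ) (e : ℝ), (∀ w, |b w| ≤ c * D) ∧ |e| ≤ D ∧
      (∀ g w, b (fun i => g * w i) = b w) ∧
      ∀ w ∈ i.1, |F w + hd (n + 1) b w - e| ≤ D * (1 / ((i.2 : ℝ) + 1)) := by
    intro i
    obtain ⟨Ω, _, _, U, hU⟩ := hW (n + 2) i.1 (1 / ((i.2 : ℝ) + 1)) (by positivity)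
    refine ⟨hH U (n + 1) F, hPhi U (n + 2) F (fun _ => 1), hb Ω U F D hFD,
      hPhi_bound U _ F D hFD _, ?_, ?_⟩
    · intro g w
      have := hH_hT U (n + 1) g F
      have e : hT (n + 2) g F = F := by ext v; exact hFinv g v
      rw [e] at this
      exact (congrFun this w).symm
    · intro w hw
      have h1 := congrFun (hH_homotopy U (n + 1) F) w
      rw [hFc, map_zero, add_zero, Pi.sub_apply] at h1
      rw [h1, add_sub_cancel]
      have h2 := hU (D⁻¹ • F) (fun w => by
        simp only [Pi.smul_apply, smul_eq_mul, abs_mul, abs_inv, abs_of_pos hDpos]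
        rw [inv_mul_le_iff₀ hDpos]; simpa using hFD w) (fun g w => by
          simp only [Pi.smul_apply, hFinv]) w hw
      rw [map_smul] at h2
      simp only [Pi.smul_apply, smul_eq_mul] at h2
      rw [← mul_sub, abs_mul, abs_inv, abs_of_pos hDpos, inv_mul_le_iff₀ hDpos] at h2
      exact h2
  choose b e hbb he hbi hbe using key
  let u : Ultrafilter ι := Ultrafilter.of Filter.atTop
  have hu : (u : Filter ι) ≤ Filter.atTop := Ultrafilter.of_le _
  choose B hBb hBt using fun w => ultra_lim u (fun i => b i w) (c * D) (fun i => hbb i w)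
  obtain ⟨E, -, hEt⟩ := ultra_lim u e D he
  have hBi : ∀ g w, B (fun i => g * w i) = B w := by
    intro g w
    refine tendsto_nhds_unique (hBt _) ?_
    simp only [hbi]; exact hBt w
  have hmain : ∀ w, F w + hd (n + 1) B w = E := by
    intro w
    have t1 : Filter.Tendsto (fun i => F w + hd (n + 1) (b i) w - e i) u
        (nhds (F w + hd (n + 1) B w - E)) := by
      refine (Filter.Tendsto.const_add _ ?_).sub hEt
      simp only [hd, LinearMap.coe_mk, AddHom.coe_mk]
      exact tendsto_finsetSum _ fun j _ => (hBt _).const_mul _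
    have t2 : Filter.Tendsto (fun i : ι => D * (1 / ((i.2 : ℝ) + 1))) u (nhds 0) := by
      have : Filter.Tendsto (fun i : ι => i.2) Filter.atTop Filter.atTop := by
        rw [← Filter.prod_atTop_atTop_eq]; exact Filter.tendsto_snd
      have := ((tendsto_one_div_add_atTop_nhds_zero_nat (𝕜 := ℝ)).comp this).const_mul D
      rw [mul_zero] at this
      exact this.mono_left hu
    have ev : ∀ᶠ i : ι in u, |F w + hd (n + 1) (b i) w - e i| ≤ D * (1 / ((i.2 : ℝ) + 1)) := by
      refine hu ?_
      filter_upwards [Filter.eventually_ge_atTop (({w}, 0) : ι)] with i hi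
      exact hbe i w (hi.1 (Finset.mem_singleton_self w))
    have := tendsto_nhds_unique t1 (squeeze_zero_norm' ev t2)
    linarith
  have hE : ∀ w : Fin (n + 2) → W, hd (n + 1) (fun _ => E) w = E := by
    intro w
    rw [hd_const]
    split_ifs with h
    · rfl
    · have h0 : F + hd (n + 1) B = fun _ => E := funext hmain
      have h1 := congrFun (congrArg (hd (n + 2)) h0) (fun _ => 1)
      rw [map_add, hFc, hd_hd, hd_const, if_pos] at h1
      · simpa using h1
      · rw [Nat.not_even_iff_odd] at h
        exact h.add_one
  refine ⟨fun g => E - B (Fin.partialProd g), ⟨|E| + c * D, fun g => ?_⟩, ?_⟩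
  · rw [Real.norm_eq_abs]
    exact (abs_sub _ _).trans (add_le_add le_rfl (hBb _))
  · have hdp : ∀ {m : ℕ} (g : Fin m → W), hdiff (Fin.partialProd g) = g := by
      intro m g; funext i; exact Fin.partialProd_right_inv g i
    have hpd : ∀ {m : ℕ} (w : Fin (m + 1) → W),
        (fun i => w 0 * Fin.partialProd (hdiff w) i) = w := by
      intro m w; exact Fin.partialProd_left_inv w
    funext g
    rw [← hdp g, ← hd_hdiff]
    have h2 : (fun v : Fin (n + 1) → W => E - B (Fin.partialProd (hdiff v))) = (fun _ => E) - B := by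
      funext v
      have := hBi (v 0) (Fin.partialProd (hdiff v))
      rw [hpd] at this
      simp [this]
    rw [h2, map_sub, Pi.sub_apply, hE]
    have := hmain (Fin.partialProd g)
    simp only [hF] at this
    linarith

end PartA

noncomputable section PartB1

/-- uniform average over a finite type -/
def av {Ω : Type*} [Fintype Ω] (φ : Ω → ℝ) : ℝ := (Fintype.card Ω : ℝ)⁻¹ * ∑ ω, φ ω

theorem av_equiv {Ω Ω' : Type*} [Fintype Ω] [Fintype Ω'] (σ : Ω ≃ Ω') (φ : Ω' → ℝ) :
    av (fun ω => φ (σ ω)) = av φ := by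
  unfold av; rw [σ.sum_comp φ, Fintype.card_congr σ]

theorem av_prod {Ω Ω' : Type*} [Fintype Ω] [Fintype Ω'] (φ : Ω × Ω' → ℝ) :
    av φ = av (fun ω => av (fun ω' => φ (ω, ω'))) := by
  unfold av
  rw [Fintype.sum_prod_type, ← Finset.mul_sum, Fintype.card_prod]
  push_cast; rw [mul_inv, mul_assoc]

theorem av_comm {Ω Ω' : Type*} [Fintype Ω] [Fintype Ω'] (φ : Ω → Ω' → ℝ) :
    av (fun ω => av (fun ω' => φ ω ω')) = av (fun ω' => av (fun ω => φ ω ω')) := by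
  unfold av
  rw [← Finset.mul_sum, ← Finset.mul_sum, Finset.sum_comm]; ring

theorem av_sub {Ω : Type*} [Fintype Ω] (φ ψ : Ω → ℝ) :
    av (fun ω => φ ω - ψ ω) = av φ - av ψ := by
  unfold av; rw [Finset.sum_sub_distrib]; ring

theorem av_const {Ω : Type*} [Fintype Ω] [Nonempty Ω] (c : ℝ) :
    av (fun _ : Ω => c) = c := by
  unfold av; simp

theorem abs_av_le {Ω : Type*} [Fintype Ω] [Nonempty Ω] (φ : Ω → ℝ) (C : ℝ) (h : ∀ ω, |φ ω| ≤ C) :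
    |av φ| ≤ C := by
  unfold av
  have hp : (0 : ℝ) < Fintype.card Ω := by exact_mod_cast Fintype.card_pos
  rw [abs_mul, abs_of_pos (inv_pos.2 hp), inv_mul_le_iff₀ hp]
  refine (Finset.abs_sum_le_sum_abs _ _).trans ?_
  refine (Finset.sum_le_sum (g := fun _ => C) fun i _ => h _).trans ?_
  simp [Finset.card_univ]

theorem av_close {Ω : Type*} [Fintype Ω] [Nonempty Ω] (φ ψ : Ω → ℝ) (C : ℝ)
    (h : ∀ ω, |φ ω - ψ ω| ≤ C) : |av φ - av ψ| ≤ C := by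
  rw [← av_sub]; exact abs_av_le _ _ h

/-- coupling -/
theorem av_coupling {Ω : Type*} [Fintype Ω] [Nonempty Ω] (σ : Ω ≃ Ω) (bad : Finset Ω) (β : ℝ)
    (hbad : (bad.card : ℝ) ≤ β * Fintype.card Ω) (φ ψ : Ω → ℝ) (hφ : ∀ ω, |φ ω| ≤ 1)
    (hψ : ∀ ω, |ψ ω| ≤ 1) (h : ∀ ω, ω ∉ bad → φ ω = ψ (σ ω)) : |av φ - av ψ| ≤ 2 * β := by
  classical
  rw [← av_equiv σ ψ, ← av_sub]
  unfold av
  have hp : (0 : ℝ) < Fintype.card Ω := by exact_mod_cast Fintype.card_pos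
  rw [abs_mul, abs_of_pos (inv_pos.2 hp), inv_mul_le_iff₀ hp]
  refine (Finset.abs_sum_le_sum_abs _ _).trans ?_
  have : ∀ ω ∈ Finset.univ, |φ ω - ψ (σ ω)| ≤ if ω ∈ bad then 2 else 0 := by
    intro ω _
    split_ifs with hb
    · refine (abs_sub _ _).trans ?_
      linarith [hφ ω, hψ (σ ω)]
    · rw [h ω hb]; simp
  refine (Finset.sum_le_sum this).trans ?_
  rw [Finset.sum_ite_mem, Finset.univ_inter, Finset.sum_const, nsmul_eq_mul]
  linarith

theorem card_bad_single {P Λ : Type*} [Fintype P] [DecidableEq P] [Fintype Λ] [DecidableEq Λ]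
    (p : P) (B : Finset Λ) :
    (Finset.univ.filter (fun ω : P → Λ => ω p ∈ B)).card * Fintype.card Λ
      = B.card * Fintype.card (P → Λ) := by
  have : Finset.univ.filter (fun ω : P → Λ => ω p ∈ B)
      = Fintype.piFinset (Function.update (fun _ => Finset.univ) p B) := by
    ext ω
    simp only [Finset.mem_filter, Finset.mem_univ, true_and, Fintype.mem_piFinset]
    constructor
    · intro h q
      by_cases hq : q = p
      · subst hq; simpa using h
      · simp [hq]
    · intro h; simpa using h p
  rw [this, Fintype.card_piFinset]
  have h2 : ∀ q, (Function.update (fun _ => Finset.univ) p B q).card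
      = Function.update (fun _ : P => Fintype.card Λ) p B.card q := by
    intro q
    by_cases hq : q = p
    · subst hq; simp
    · simp [hq, Finset.card_univ]
  simp_rw [h2]
  rw [Finset.prod_update_of_mem (Finset.mem_univ p), Fintype.card_fun]
  rw [Finset.prod_const, Finset.card_sdiff, Finset.card_univ]
  simp only [Finset.inter_univ, Finset.card_singleton]
  rw [mul_assoc, ← pow_succ, Nat.sub_add_cancel (Fintype.card_pos_iff.2 ⟨p⟩)]

theorem card_bad {P Λ : Type*} [Fintype P] [DecidableEq P] [Fintype Λ] [DecidableEq Λ] [Nonempty Λ]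
    (T : Finset P) (B : P → Finset Λ) (m : ℝ) (hB : ∀ p ∈ T, ((B p).card : ℝ) ≤ m) :
    ((Finset.univ.filter (fun ω : P → Λ => ∃ p ∈ T, ω p ∈ B p)).card : ℝ)
      ≤ (T.card * m / Fintype.card Λ) * Fintype.card (P → Λ) := by
  have h1 : Finset.univ.filter (fun ω : P → Λ => ∃ p ∈ T, ω p ∈ B p)
      = T.biUnion (fun p => Finset.univ.filter (fun ω : P → Λ => ω p ∈ B p)) := by
    ext ω; simp
  rw [h1]
  have h2 : ((T.biUnion (fun p => Finset.univ.filter (fun ω : P → Λ => ω p ∈ B p))).card : ℝ)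
      ≤ ∑ p ∈ T, ((Finset.univ.filter (fun ω : P → Λ => ω p ∈ B p)).card : ℝ) := by
    exact_mod_cast Finset.card_biUnion_le
  refine h2.trans ?_
  have hp : (0 : ℝ) < Fintype.card Λ := by exact_mod_cast Fintype.card_pos
  have h3 : ∀ p ∈ T, ((Finset.univ.filter (fun ω : P → Λ => ω p ∈ B p)).card : ℝ)
      ≤ m / Fintype.card Λ * Fintype.card (P → Λ) := by
    intro p hpT
    have := card_bad_single p (B p)
    have h4 : ((Finset.univ.filter (fun ω : P → Λ => ω p ∈ B p)).card : ℝ) * Fintype.card Λ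
      = (B p).card * Fintype.card (P → Λ) := by exact_mod_cast this
    rw [div_mul_eq_mul_div, le_div_iff₀ hp, h4]
    exact mul_le_mul_of_nonneg_right (hB p hpT) (by positivity)
  refine (Finset.sum_le_sum h3).trans (le_of_eq ?_)
  rw [Finset.sum_const, nsmul_eq_mul]; ring

/-- planting lemma -/
theorem planting {Ω Y κ : Type*} [Fintype Ω] [Nonempty Ω] [Fintype Y] [Nonempty Y] [Fintype κ]
    [Nonempty κ] (get : κ → Ω → Y) (set : κ → Y → Ω → Ω)
    (h1 : ∀ k y a, get k (set k y a) = y) (h2 : ∀ k y y' a, set k y' (set k y a) = set k y' a)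
    (h3 : ∀ k a, set k (get k a) a = a)
    (h4 : ∀ k l, k ≠ l → ∀ y a, get l (set k y a) = get l a)
    (y : Y) (φ : Ω → ℝ) (hφ : ∀ a, |φ a| ≤ 1) :
    |av (fun k => av (fun a => φ (set k y a))) - av φ|
      ≤ Real.sqrt (Fintype.card Y / Fintype.card κ) := by
  classical
  set c : ℝ := (Fintype.card Y : ℝ) with hc
  have hcpos : 0 < c := by rw [hc]; exact_mod_cast Fintype.card_pos
  set Dn : κ → Ω → ℝ := fun k a => if get k a = y then c else 0 with hDn
  have star : ∀ k (ψ : Ω → ℝ), ∑ a, ψ (set k y a) = ∑ a, Dn k a * ψ a := by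
    intro k ψ
    let θ : (Y × Ω) ≃ (Y × Ω) :=
      { toFun := fun p => (get k p.2, set k p.1 p.2)
        invFun := fun p => (get k p.2, set k p.1 p.2)
        left_inv := by rintro ⟨z, a⟩; simp [h1, h2, h3]
        right_inv := by rintro ⟨z, a⟩; simp [h1, h2, h3] }
    have e := θ.sum_comp (fun p => if get k p.2 = y then ψ p.2 else 0)
    rw [Fintype.sum_prod_type, Fintype.sum_prod_type] at e
    simp only [θ, Equiv.coe_fn_mk, h1, Finset.sum_const, Finset.card_univ, nsmul_eq_mul] at e
    rw [Finset.sum_eq_single y (by intro b _ hb; simp [hb]) (by simp)] at e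
    simp only [if_true] at e
    rw [e, Finset.mul_sum]
    refine Finset.sum_congr rfl fun a _ => ?_
    simp only [hDn]; split_ifs <;> simp [hc]
  have hO : (0 : ℝ) < Fintype.card Ω := by exact_mod_cast Fintype.card_pos
  have hκ : (0 : ℝ) < Fintype.card κ := by exact_mod_cast Fintype.card_pos
  set o : ℝ := (Fintype.card Ω : ℝ) with ho
  set q : ℝ := (Fintype.card κ : ℝ) with hq
  have s1 : ∀ k, ∑ a, Dn k a = o := by
    intro k
    have := star k (fun _ => 1)
    simp at this
    rw [← this]
  have s2 : ∀ k l, k ≠ l → ∑ a, Dn k a * Dn l a = o := by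
    intro k l hkl
    rw [← star k (Dn l), ← s1 l]
    refine Finset.sum_congr rfl fun a _ => ?_
    simp only [hDn, h4 k l hkl]
  have s3 : ∀ k, ∑ a, Dn k a * Dn k a = c * o := by
    intro k
    rw [← star k (Dn k)]
    simp [hDn, h1, ho, mul_comm]
  -- variance
  set Z : Ω → ℝ := fun a => ∑ k, (Dn k a - 1) with hZ
  have hvar : ∑ a, Z a ^ 2 ≤ q * (c * o) := by
    have : ∀ a, Z a ^ 2 = ∑ k, ∑ l, (Dn k a - 1) * (Dn l a - 1) := by
      intro a; rw [hZ, pow_two, Finset.sum_mul_sum]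
    simp_rw [this]
    rw [Finset.sum_comm]
    have hk : ∀ k ∈ Finset.univ, ∑ a, ∑ l, (Dn k a - 1) * (Dn l a - 1) ≤ c * o := by
      intro k _
      rw [Finset.sum_comm]
      have hl : ∀ l, ∑ a, (Dn k a - 1) * (Dn l a - 1) = if l = k then c * o - o else 0 := by
        intro l
        have : ∀ a, (Dn k a - 1) * (Dn l a - 1) = Dn k a * Dn l a - Dn k a - Dn l a + 1 := by
          intro a; ring
        simp_rw [this]
        rw [Finset.sum_add_distrib, Finset.sum_sub_distrib, Finset.sum_sub_distrib, s1, s1]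
        split_ifs with h
        · subst h; rw [s3]; simp [Finset.card_univ, ← ho]
        · rw [s2 k l (Ne.symm h)]; simp [Finset.card_univ, ← ho]
      simp_rw [hl]
      simp
      exact hO.le
    refine (Finset.sum_le_sum hk).trans (le_of_eq ?_)
    simp [Finset.card_univ, hq]
  have hdiff : av (fun k => av (fun a => φ (set k y a))) - av φ = (q * o)⁻¹ * ∑ a, Z a * φ a := by
    unfold av
    simp_rw [star]
    rw [← hq, ← ho]
    have : ∑ a, Z a * φ a = ∑ k, ∑ a, Dn k a * φ a - q * ∑ a, φ a := by
      simp_rw [hZ, Finset.sum_mul]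
      rw [Finset.sum_comm]
      simp_rw [sub_mul, one_mul, Finset.sum_sub_distrib]
      simp [Finset.card_univ, hq]
    rw [this, ← Finset.mul_sum]
    field_simp
  rw [hdiff]
  apply Real.abs_le_sqrt
  have cs := Finset.sum_mul_sq_le_sq_mul_sq Finset.univ Z φ
  have hφ2 : ∑ a, φ a ^ 2 ≤ o := by
    refine (Finset.sum_le_sum (g := fun _ => (1 : ℝ)) fun a _ => ?_).trans ?_
    · rw [sq_le_one_iff_abs_le_one]; exact hφ a
    · simp [Finset.card_univ, ho]
  have hfin : (∑ a, Z a * φ a) ^ 2 ≤ q * (c * o) * o :=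
    cs.trans (mul_le_mul hvar hφ2 (Finset.sum_nonneg fun _ _ => sq_nonneg _) (by positivity))
  rw [mul_pow, inv_pow, inv_mul_le_iff₀ (by positivity)]
  refine hfin.trans (le_of_eq ?_)
  field_simp

end PartB1

noncomputable section PartB2

variable {G : Type u} [Group G]

/-- site states: a length and a word -/
abbrev Site (A : Finset G) (M : ℕ) := Fin (M + 1) × (Fin (M + 1) → A)

/-- group element of a site state -/
def siteX {A : Finset G} {M : ℕ} (s : Site A M) : G :=
  ((List.ofFn (fun i => (s.2 i : G))).take s.1).prod

/-- overwrite the first letter -/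
def siteSet {A : Finset G} {M : ℕ} (b : A) (s : Site A M) : Site A M :=
  (s.1, Function.update s.2 0 b)

/-- rotation -/
def siteRot (A : Finset G) (M : ℕ) : Site A M ≃ Site A M :=
  Equiv.prodCongr (finRotate (M + 1)) (Equiv.arrowCongr (finRotate (M + 1)) (Equiv.refl A))

theorem siteX_rot {A : Finset G} {M : ℕ} (b : A) (s : Site A M) (h : s.1 ≠ Fin.last M) :
    siteX (siteSet b (siteRot A M s)) = b * siteX s := by
  obtain ⟨l, w⟩ := s
  have hl : (l : ℕ) < M := by
    have := Fin.val_lt_last h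
    simpa using this
  have e1 : (siteSet b (siteRot A M (l, w))).2 = Fin.cons b (fun i : Fin M => w i.castSucc) := by
    funext i
    refine Fin.cases ?_ (fun j => ?_) i
    · simp [siteSet]
    · simp only [siteSet, siteRot, Fin.cons_succ]
      rw [Function.update_of_ne (Fin.succ_ne_zero j)]
      simp only [Equiv.prodCongr_apply, Prod.map, Equiv.arrowCongr_apply, Function.comp,
        Equiv.refl_apply]
      congr 1
      rw [Equiv.symm_apply_eq, finRotate_apply]
      simp
  have e2 : ((siteSet b (siteRot A M (l, w))).1 : ℕ) = l + 1 := by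
    simp only [siteSet, siteRot, Equiv.prodCongr_apply, Prod.map]
    rw [coe_finRotate_of_ne_last h]
  unfold siteX
  rw [e2]
  simp only [e1]
  rw [List.ofFn_succ]
  simp only [Fin.cons_zero, Fin.cons_succ, List.take_succ_cons, List.prod_cons]
  congr 2
  rw [List.ofFn_succ_last, List.take_append_of_le_length]
  simp; omega

/-- element of the base group attached to a finite field -/
def fieldV {A : Finset G} {M : ℕ} {win : Finset ℤ} (a : win → Site A M) : finSupp ℤ G :=
  ⟨fun z => if h : z ∈ win then siteX (a ⟨z, h⟩) else 1, by
    refine Set.Finite.subset win.finite_toSet ?_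
    intro z hz
    by_contra h
    exact hz (dif_neg h)⟩

/-- translation element -/
def tpow (G : Type u) [Group G] (j : ℤ) : WreathZ G := SemidirectProduct.inr (Multiplicative.ofAdd j)

/-- base element -/
def base (b : finSupp ℤ G) : WreathZ G := SemidirectProduct.inl b

/-- shift -/
def sh (k : ℤ) (b : finSupp ℤ G) : finSupp ℤ G := shiftHom G (Multiplicative.ofAdd k) b

theorem sh_apply (k : ℤ) (b : finSupp ℤ G) (z : ℤ) : (sh k b : ℤ → G) z = (b : ℤ → G) (z - k) := rfl

theorem tpow_add (i j : ℤ) : tpow G (i + j) = tpow G i * tpow G j := by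
  unfold tpow; rw [ofAdd_add, map_mul]

theorem tpow_base (k : ℤ) (b : finSupp ℤ G) : tpow G k * base b = base (sh k b) * tpow G k := by
  unfold tpow base sh
  rw [SemidirectProduct.inl_aut]
  simp

theorem base_mul (b c : finSupp ℤ G) : base (b * c) = base b * base c := map_mul _ _ _

theorem wreath_decomp (w : WreathZ G) : w = base w.left * tpow G w.right.toAdd := by
  unfold base tpow
  simp

/-- shift invariance of the uniform measure on a big box -/
theorem box_shift {I : Type*} [Fintype I] [DecidableEq I] (N : ℕ) (ψ : (I → ℤ) → ℝ)
    (hψ : ∀ j, |ψ j| ≤ 1) (c : I → ℤ) (m : ℕ) (hc : ∀ i, |c i| ≤ m) :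
    |av (fun j : I → Fin (N + 1) => ψ (fun i => (j i : ℤ) + c i))
      - av (fun j : I → Fin (N + 1) => ψ (fun i => (j i : ℤ)))|
      ≤ 2 * (Fintype.card I * m / (N + 1)) := by
  classical
  let B : I → Finset (Fin (N + 1)) := fun i =>
    Finset.univ.filter fun j => ¬ (0 ≤ (j : ℤ) + c i ∧ (j : ℤ) + c i < N + 1)
  have hB : ∀ i, ((B i).card : ℝ) ≤ m := by
    intro i
    have : (B i).card ≤ (Finset.Ico (0 : ℤ) |c i|).card := by
      refine Finset.card_le_card_of_injOn
        (fun j => if 0 ≤ c i then (N : ℤ) - j else (j : ℤ)) ?_ ?_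
      · intro j hj
        simp only [B, Finset.coe_filter, Finset.mem_univ, true_and, Set.mem_ofPred_eq] at hj
        have := j.2
        simp only [Finset.coe_Ico, Set.mem_Ico]
        split_ifs with h
        · rw [abs_of_nonneg h]; omega
        · rw [abs_of_neg (not_le.1 h)]; omega
      · intro j _ j' _ hjj
        simp only at hjj
        apply Fin.ext
        split_ifs at hjj <;> omega
    rw [Int.card_Ico, sub_zero] at this
    have h2 := hc i
    have : (B i).card ≤ m := by omega
    exact_mod_cast this
  have hb := card_bad (Λ := Fin (N + 1)) (Finset.univ : Finset I) B m (fun i _ => hB i)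
  have hN : (0 : ℤ) < (N : ℤ) + 1 := by omega
  let s : ℤ → Fin (N + 1) → Fin (N + 1) := fun e j =>
    ⟨(((j : ℤ) + e) % ((N : ℤ) + 1)).toNat, by
      have h1 := Int.emod_nonneg ((j : ℤ) + e) hN.ne'
      have h2 := Int.emod_lt_of_pos ((j : ℤ) + e) hN
      omega⟩
  have hs : ∀ e, Function.Bijective (s e) := by
    intro e
    refine Finite.injective_iff_bijective.1 fun j j' h => ?_
    simp only [s, Fin.mk.injEq] at h
    have h1 := Int.emod_nonneg ((j : ℤ) + e) hN.ne'
    have h2 := Int.emod_nonneg ((j' : ℤ) + e) hN.ne'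
    have h3 : ((j : ℤ) + e) % ((N : ℤ) + 1) = ((j' : ℤ) + e) % ((N : ℤ) + 1) := by omega
    have h5 := Int.dvd_of_emod_eq_zero (Int.emod_eq_emod_iff_emod_sub_eq_zero.1 h3)
    have h6 := Int.eq_zero_of_abs_lt_dvd h5 (by rw [abs_lt]; omega)
    apply Fin.ext; omega
  let σ : (I → Fin (N + 1)) ≃ (I → Fin (N + 1)) :=
    Equiv.piCongrRight fun i => Equiv.ofBijective _ (hs (c i))
  have := av_coupling σ _ _ hb (fun j => ψ (fun i => (j i : ℤ) + c i))
    (fun j => ψ (fun i => (j i : ℤ))) (fun _ => hψ _) (fun _ => hψ _) ?_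
  · simpa using this
  · intro j hj
    simp only [Finset.mem_filter, Finset.mem_univ, true_and, not_exists, B, not_not] at hj
    congr 1
    funext i
    have hji := hj i
    simp only [σ, Equiv.piCongrRight_apply, Pi.map_apply, Equiv.ofBijective_apply, s]
    rw [Int.emod_eq_of_lt hji.1 hji.2]
    omega

end PartB2

noncomputable section PartB3

variable {G : Type u} [Group G]

/-- For fixed `j`, planting at a random block is invisible. -/
theorem block_planting {I : Type} [Fintype I] [DecidableEq I] (A : Finset G) (hA : A.Nonempty)
    (R K N M : ℕ) (win : Finset ℤ)
    (hwin : win = Finset.Icc (-((N : ℤ) + R)) (((K : ℤ) + 1) * (2 * R + 1) + R))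
    (j : I → Fin (N + 1)) (b : I → finSupp ℤ G)
    (hbA : ∀ i z, (b i : ℤ → G) z ∈ A)
    (hbR : ∀ i z, z ∉ Finset.Icc (-(R : ℤ)) R → (b i : ℤ → G) z = 1)
    (f : (I → WreathZ G) → ℝ) (hf : ∀ w, |f w| ≤ 1) :
    |av (fun k : Fin (K + 1) => av (fun a : I × win → Site A M =>
        f (fun i => base (sh ((k : ℤ) * (2 * R + 1)) (b i)) *
          (tpow G (j i : ℤ) * base (fieldV (fun z => a (i, z)))))))
      - av (fun a : I × win → Site A M =>
        f (fun i => tpow G (j i : ℤ) * base (fieldV (fun z => a (i, z)))))|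
    ≤ 2 * (Fintype.card I * (2 * R + 1) / (M + 1)) +
      Real.sqrt (Fintype.card (I × Finset.Icc (-(R : ℤ)) R → A) / (K + 1)) := by
  classical
  have : Nonempty A := hA.to_subtype
  set Ω := I × win → Site A M with hΩ
  set Q := I × Finset.Icc (-(R : ℤ)) R with hQ
  set ρ : ℤ := 2 * R + 1 with hρ
  have hρ0 : 0 < ρ := by omega
  have hmem : ∀ (k : Fin (K + 1)) (q : Q), (k : ℤ) * ρ - j q.1 + q.2 ∈ win := by
    intro k q
    have h1 := (j q.1).2
    have h2 := Finset.mem_Icc.1 q.2.2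
    have h3 : (k : ℤ) * ρ ≤ ((K : ℤ) + 1) * ρ := by
      apply mul_le_mul_of_nonneg_right _ hρ0.le
      have := k.2; omega
    have h4 : 0 ≤ (k : ℤ) * ρ := by positivity
    rw [hwin, Finset.mem_Icc]
    omega
  let inb : Fin (K + 1) → I × win → Prop := fun k p =>
    (p.2 : ℤ) - (k : ℤ) * ρ + j p.1 ∈ Finset.Icc (-(R : ℤ)) R
  let get : Fin (K + 1) → Ω → (Q → A) := fun k a q =>
    (a (q.1, ⟨(k : ℤ) * ρ - j q.1 + q.2, hmem k q⟩)).2 0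
  let set : Fin (K + 1) → (Q → A) → Ω → Ω := fun k y a p =>
    if h : inb k p then siteSet (y (p.1, ⟨_, h⟩)) (a p) else a p
  have hinb : ∀ (k : Fin (K + 1)) (q : Q), inb k (q.1, ⟨(k : ℤ) * ρ - j q.1 + q.2, hmem k q⟩) := by
    intro k q
    simp only [inb]
    convert q.2.2 using 1
    ring
  have hinbne : ∀ (k l : Fin (K + 1)), k ≠ l → ∀ p, inb k p → ¬ inb l p := by
    intro k l hkl p hk hl
    simp only [inb, Finset.mem_Icc] at hk hl
    have : ρ ∣ (k : ℤ) * ρ - l * ρ := ⟨k - l, by ring⟩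
    have h0 := Int.eq_zero_of_abs_lt_dvd this (by rw [abs_lt]; omega)
    have h1 : ((k : ℤ) - l) * ρ = 0 := by rw [← h0]; ring
    rcases mul_eq_zero.1 h1 with h | h
    · apply hkl; apply Fin.ext; omega
    · omega
  have g1 : ∀ k y a, get k (set k y a) = y := by
    intro k y a
    funext q
    simp only [get, set]
    rw [dif_pos (hinb k q)]
    simp only [siteSet, Function.update_self]
    congr 1
    refine Prod.ext rfl (Subtype.ext ?_)
    simp only
    ring
  have g2 : ∀ k y y' a, set k y' (set k y a) = set k y' a := by
    intro k y y' a
    funext p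
    simp only [set]
    split_ifs with h
    · simp [siteSet]
    · rfl
  have g3 : ∀ k a, set k (get k a) a = a := by
    intro k a
    funext p
    simp only [set]
    split_ifs with h
    · have : (get k a (p.1, ⟨_, h⟩)) = (a p).2 0 := by
        have hz : (k : ℤ) * ρ - j p.1 + ((p.2 : ℤ) - (k : ℤ) * ρ + j p.1) = p.2 := by ring
        have hp : ((p.1, ⟨_, hmem k (p.1, ⟨_, h⟩)⟩) : I × win) = p :=
          Prod.ext rfl (Subtype.ext hz)
        exact congrArg (fun p' => (a p').2 0) hp
      rw [this]
      simp [siteSet]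
    · rfl
  have g4 : ∀ k l, k ≠ l → ∀ y a, get l (set k y a) = get l a := by
    intro k l hkl y a
    funext q
    simp only [get, set]
    rw [dif_neg (fun h => hinbne k l hkl _ h (hinb l q))]
  let φ : Ω → ℝ := fun a => f (fun i => tpow G (j i : ℤ) * base (fieldV (fun z => a (i, z))))
  let y : Q → A := fun q => ⟨(b q.1 : ℤ → G) q.2, hbA _ _⟩
  have hpl := planting get set g1 g2 g3 g4 y φ (fun a => hf _)
  have hcpl : ∀ k : Fin (K + 1), |av (fun a : Ω =>
        f (fun i => base (sh ((k : ℤ) * ρ) (b i)) *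
          (tpow G (j i : ℤ) * base (fieldV (fun z => a (i, z)))))) - av (fun a => φ (set k y a))|
      ≤ 2 * (Fintype.card I * (2 * R + 1) / (M + 1)) := by
    intro k
    let T : Finset (I × win) := Finset.univ.filter (inb k)
    have hT : T.card ≤ Fintype.card I * (2 * R + 1) := by
      have : T.card ≤ (Finset.univ : Finset Q).card := by
        refine Finset.card_le_card_of_injOn
          (fun p => if h : inb k p then (p.1, ⟨_, h⟩) else (p.1, ⟨0, by simp⟩)) (by simp) ?_
        intro p hp p' hp' hpp
        simp only [T, Finset.coe_filter, Finset.mem_univ, true_and, Set.mem_ofPred_eq] at hp hp'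
        simp only [dif_pos hp, dif_pos hp'] at hpp
        have e1 : p.1 = p'.1 := congrArg (fun q : Q => q.1) hpp
        have e2 : (p.2 : ℤ) - (k : ℤ) * ρ + j p.1 = (p'.2 : ℤ) - (k : ℤ) * ρ + j p'.1 :=
          congrArg (fun q : Q => (q.2 : ℤ)) hpp
        refine Prod.ext e1 (Subtype.ext ?_)
        rw [e1] at e2
        linarith
      refine this.trans (le_of_eq ?_)
      rw [Finset.card_univ, Fintype.card_prod, Fintype.card_coe, Int.card_Icc]
      congr 1; omega
    let Bd : Finset (Site A M) := Finset.univ.filter fun s => s.1 = Fin.last M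
    have hBd : (Bd.card : ℝ) * (M + 1) = Fintype.card (Site A M) := by
      have : Bd = ({Fin.last M} : Finset (Fin (M + 1))) ×ˢ (Finset.univ : Finset (Fin (M + 1) → A)) := by
        ext ⟨l, w⟩; simp [Bd, eq_comm]
      rw [this, Finset.card_product, Fintype.card_prod]
      simp [Finset.card_univ]
      ring
    have hb := card_bad T (fun _ => Bd) Bd.card (fun _ _ => le_rfl)
    let σ : Ω ≃ Ω := Equiv.piCongrRight fun p => if inb k p then siteRot A M else Equiv.refl _
    have hb' : ((Finset.univ.filter (fun a : Ω => ∃ p ∈ T, a p ∈ Bd)).card : ℝ)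
        ≤ (Fintype.card I * (2 * R + 1) / (M + 1)) * Fintype.card Ω := by
      refine hb.trans ?_
      refine mul_le_mul_of_nonneg_right ?_ (by positivity)
      have hBpos : (0 : ℝ) < Bd.card := by
        have : (0 : ℝ) < Fintype.card (Site A M) := by exact_mod_cast Fintype.card_pos
        rw [← hBd] at this
        exact pos_of_mul_pos_left this (by positivity)
      rw [← hBd, mul_comm (Bd.card : ℝ), mul_div_mul_right _ _ hBpos.ne']
      refine div_le_div_of_nonneg_right ?_ (by positivity)
      exact_mod_cast hT
    have := av_coupling σ _ _ hb' (fun a : Ω =>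
        f (fun i => base (sh ((k : ℤ) * ρ) (b i)) *
          (tpow G (j i : ℤ) * base (fieldV (fun z => a (i, z))))))
        (fun a => φ (set k y a)) (fun _ => hf _) (fun _ => hf _) ?_
    · exact this
    · intro a ha
      simp only [Finset.mem_filter, Finset.mem_univ, true_and, not_exists, not_and, T, Bd] at ha
      simp only [φ]
      congr 1
      funext i
      have e1 : sh ((k : ℤ) * ρ) (b i) = sh (j i : ℤ) (sh ((k : ℤ) * ρ - j i) (b i)) := by
        ext z
        simp only [sh_apply]
        congr 1; ring
      rw [e1, ← mul_assoc, ← tpow_base, mul_assoc, ← base_mul]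
      congr 2
      ext z
      rw [Subgroup.coe_mul, Pi.mul_apply, sh_apply]
      by_cases hz : z ∈ win
      · have hσ : ∀ p, σ a p = (if inb k p then siteRot A M else Equiv.refl _) (a p) := fun _ => rfl
        simp only [fieldV, dif_pos hz, set, hσ]
        by_cases hin : inb k (i, ⟨z, hz⟩)
        · rw [dif_pos hin, if_pos hin, siteX_rot _ _ (ha _ hin)]
          simp only [y]
          congr 2; ring
        · rw [dif_neg hin, if_neg hin, hbR i, one_mul]
          · rfl
          · intro h
            apply hin
            simp only [inb]
            convert h using 1; ring
      · simp only [fieldV, dif_neg hz, mul_one]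
        apply hbR i
        intro h
        apply hz
        have := hmem k (i, ⟨_, h⟩)
        simp only at this
        convert this using 1; ring
  have hsum := av_close _ _ _ hcpl
  have hcard : (Fintype.card (Fin (K + 1)) : ℝ) = K + 1 := by simp
  rw [hcard] at hpl
  exact (abs_sub_le _ _ _).trans (add_le_add hsum hpl)

end PartB3

noncomputable section PartB4

variable {G : Type u} [Group G]

theorem exists_data (n : ℕ) (S : Finset (Fin n → WreathZ G)) :
    ∃ (R c : ℕ) (A : Finset G), A.Nonempty ∧ ∀ w ∈ S, ∀ i : Fin n,
      (∀ z, ((w i).left : ℤ → G) z ∈ A) ∧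
      (∀ z, z ∉ Finset.Icc (-(R : ℤ)) R → ((w i).left : ℤ → G) z = 1) ∧
      |((w i).right.toAdd : ℤ)| ≤ c := by
  classical
  have hF : (⋃ w ∈ S, ⋃ i : Fin n, Function.mulSupport ((w i).left : ℤ → G)).Finite := by
    refine Set.Finite.biUnion S.finite_toSet fun w _ => ?_
    exact Set.finite_iUnion fun i => (w i).left.2
  have hA : (⋃ w ∈ S, ⋃ i : Fin n, insert (1 : G) (Set.range ((w i).left : ℤ → G))).Finite := by
    refine Set.Finite.biUnion S.finite_toSet fun w _ => ?_
    refine Set.finite_iUnion fun i => Set.Finite.insert _ ?_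
    have h : (Function.mulSupport ((w i).left : ℤ → G)).Finite := (w i).left.2
    refine ((h.image ((w i).left : ℤ → G)).insert 1).subset ?_
    rintro _ ⟨z, rfl⟩
    by_cases hz : ((w i).left : ℤ → G) z = 1
    · left; exact hz
    · right; exact ⟨z, hz, rfl⟩
  refine ⟨hF.toFinset.sup Int.natAbs,
    S.sup (fun w => Finset.univ.sup fun i => ((w i).right.toAdd : ℤ).natAbs),
    insert 1 hA.toFinset, Finset.insert_nonempty _ _, fun w hw i => ⟨fun z => ?_, fun z hz => ?_, ?_⟩⟩
  · refine Finset.mem_insert_of_mem ?_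
    rw [Set.Finite.mem_toFinset]
    simp only [Set.mem_iUnion]
    exact ⟨w, hw, i, Or.inr ⟨z, rfl⟩⟩
  · by_contra h
    apply hz
    have hm : z ∈ hF.toFinset := by
      rw [Set.Finite.mem_toFinset]
      simp only [Set.mem_iUnion]
      exact ⟨w, hw, i, h⟩
    have := Finset.le_sup (f := Int.natAbs) hm
    rw [Finset.mem_Icc]
    omega
  · have h1 := Finset.le_sup (f := fun i => ((w i).right.toAdd : ℤ).natAbs) (Finset.mem_univ i)
    have h2 := Finset.le_sup
      (f := fun w : Fin n → WreathZ G => Finset.univ.sup fun i => ((w i).right.toAdd : ℤ).natAbs) hw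
    have h3 := h1.trans h2
    rw [Int.abs_eq_natAbs]
    exact_mod_cast h3

theorem exists_small (C ε : ℝ) (hε : 0 < ε) : ∃ N : ℕ, C / ((N : ℝ) + 1) ≤ ε := by
  obtain ⟨N, hN⟩ := exists_nat_ge (C / ε)
  refine ⟨N, ?_⟩
  rw [div_le_iff₀ hε] at hN
  rw [div_le_iff₀ (by positivity)]
  nlinarith

/-- the random element -/
def rndU {A : Finset G} {M N : ℕ} {win : Finset ℤ} (x : Fin (N + 1) × (win → Site A M)) :
    WreathZ G := tpow G (x.1 : ℤ) * base (fieldV x.2)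

theorem hPhi_rnd {A : Finset G} {M N : ℕ} {win : Finset ℤ} (n : ℕ)
    (f : (Fin n → WreathZ G) → ℝ) (v : Fin n → WreathZ G) :
    hPhi (rndU (A := A) (M := M) (N := N) (win := win)) n f v =
      av (fun j : Fin n → Fin (N + 1) => av (fun a : Fin n × win → Site A M =>
        f (fun i => v i * (tpow G (j i : ℤ) * base (fieldV (fun z => a (i, z))))))) := by
  let e : (Fin n → Fin (N + 1) × (win → Site A M)) ≃
      (Fin n → Fin (N + 1)) × (Fin n × win → Site A M) :=
    (Equiv.arrowProdEquivProdArrow _ _ _).trans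
      (Equiv.prodCongr (Equiv.refl _) (Equiv.curry _ _ _).symm)
  rw [← av_prod (fun x : (Fin n → Fin (N + 1)) × (Fin n × win → Site A M) =>
    f (fun i => v i * (tpow G (x.1 i : ℤ) * base (fieldV (fun z => x.2 (i, z)))))), ← av_equiv e]
  rfl

theorem avgProp_wreath (G : Type u) [Group G] : AvgProp (WreathZ G) := by
  intro n S ε hε
  obtain ⟨R, c, A, hA, hS⟩ := exists_data n S
  have hε3 : 0 < ε / 3 := by positivity
  obtain ⟨K, hK⟩ := exists_small
    (Fintype.card (Fin n × Finset.Icc (-(R : ℤ)) R → A) : ℝ) ((ε / 3) ^ 2) (by positivity)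
  obtain ⟨M, hM⟩ := exists_small (2 * ((n : ℝ) * (2 * R + 1))) (ε / 3) hε3
  let m : ℕ := (K + 1) * (2 * R + 1) + c
  obtain ⟨N, hN⟩ := exists_small (2 * ((n : ℝ) * m)) (ε / 3) hε3
  let win : Finset ℤ := Finset.Icc (-((N : ℤ) + R)) (((K : ℤ) + 1) * (2 * R + 1) + R)
  have : Nonempty A := hA.to_subtype
  refine ⟨Fin (N + 1) × (win → Site A M), inferInstance, inferInstance, rndU, ?_⟩
  intro f hf hinv w hw
  rw [hPhi_rnd, hPhi_rnd]
  simp only [one_mul]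
  let b : Fin n → finSupp ℤ G := fun i => (w i).left
  let g : Fin (K + 1) → (Fin n → ℤ) → ℝ := fun k j => av (fun a : Fin n × win → Site A M =>
        f (fun i => base (sh ((k : ℤ) * (2 * R + 1)) (b i)) *
          (tpow G (j i) * base (fieldV (fun z => a (i, z))))))
  have step1 : ∀ k : Fin (K + 1),
      |av (fun j : Fin n → Fin (N + 1) => av (fun a : Fin n × win → Site A M =>
        f (fun i => w i * (tpow G (j i : ℤ) * base (fieldV (fun z => a (i, z)))))))
      - av (fun j : Fin n → Fin (N + 1) => g k (fun i => (j i : ℤ)))| ≤ ε / 3 := by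
    intro k
    have hb := box_shift N (g k) (fun j => abs_av_le _ _ fun a => hf _)
      (fun i => (k : ℤ) * (2 * R + 1) + (w i).right.toAdd) m (by
        intro i
        have h1 := (hS w hw i).2.2
        have h2 : ((k : ℕ) : ℤ) * (2 * R + 1) ≤ ((K : ℤ) + 1) * (2 * R + 1) := by
          have := k.2
          gcongr
          omega
        have h3 : 0 ≤ ((k : ℕ) : ℤ) * (2 * (R : ℤ) + 1) := by positivity
        have h4 : (m : ℤ) = ((K : ℤ) + 1) * (2 * R + 1) + c := by simp [m]
        rw [abs_le] at h1 ⊢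
        constructor <;> linarith [h1.1, h1.2])
    have hN' : 2 * ((Fintype.card (Fin n) : ℝ) * m / (N + 1)) ≤ ε / 3 := by
      rw [Fintype.card_fin, ← mul_div_assoc]; exact hN
    refine le_trans (le_of_eq ?_) (hb.trans hN')
    congr 3
    funext j
    simp only [g]
    congr 1
    funext a
    rw [← hinv (tpow G ((k : ℤ) * (2 * R + 1)))]
    congr 1
    funext i
    have hd := wreath_decomp (w i)
    rw [add_comm ((j i : ℕ) : ℤ), tpow_add, tpow_add]
    conv_lhs => rw [hd]
    simp only [← mul_assoc]
    rw [tpow_base]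
  have step2 : |av (fun j : Fin n → Fin (N + 1) => av (fun a : Fin n × win → Site A M =>
        f (fun i => w i * (tpow G (j i : ℤ) * base (fieldV (fun z => a (i, z)))))))
      - av (fun j : Fin n → Fin (N + 1) => av (fun k : Fin (K + 1) => g k (fun i => (j i : ℤ))))|
      ≤ ε / 3 := by
    rw [av_comm (fun (j : Fin n → Fin (N + 1)) (k : Fin (K + 1)) => g k (fun i => (j i : ℤ)))]
    have := av_close (Ω := Fin (K + 1)) (fun _ => _) _ _ step1
    rwa [av_const] at this
  have step3 : |av (fun j : Fin n → Fin (N + 1) =>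
        av (fun k : Fin (K + 1) => g k (fun i => (j i : ℤ))))
      - av (fun j : Fin n → Fin (N + 1) => av (fun a : Fin n × win → Site A M =>
        f (fun i => tpow G (j i : ℤ) * base (fieldV (fun z => a (i, z))))))|
      ≤ ε / 3 + ε / 3 := by
    refine av_close _ _ _ fun j => ?_
    refine (block_planting A hA R K N M win rfl j b (fun i => (hS w hw i).1)
      (fun i => (hS w hw i).2.1) f hf).trans ?_
    refine add_le_add ?_ ?_
    · rw [Fintype.card_fin, ← mul_div_assoc]; exact hM
    · exact Real.sqrt_le_iff.2 ⟨hε3.le, hK⟩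
  have := (abs_sub_le _ _ _).trans (add_le_add step2 step3)
  linarith

end PartB4

/-- For any group `G`, the restricted wreath product `W = G ≀ ℤ` is
boundedly acyclic. -/
theorem wreathZ_boundedlyAcyclic (G : Type*) [Group G] :
    BoundedlyAcyclic (WreathZ G) := by
  exact boundedlyAcyclic_of_avgProp _ (avgProp_wreath G)
end

section
/- Thompson's group F is boundedly acyclic. -/
open scoped BigOperators

/-- A real number is a dyadic rational if it is of the form `a / 2 ^ b` with `a`, `b`
integers. -/
def IsDyadic (r : ℝ) : Prop := ∃ (a : ℤ) (b : ℕ), r = a / 2 ^ b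

/-- A permutation of `[0,1]` belongs to Thompson's group `F` iff it is an increasing
bijection which is piecewise affine with finitely many breakpoints, all breakpoints
being dyadic rationals and all slopes being integer powers of `2`.  (Such a map is
automatically a homeomorphism of `[0,1]`.) -/
def IsThompson (f : Equiv.Perm ↥(Set.Icc (0 : ℝ) 1)) : Prop :=
  StrictMono (fun x => (f x : ℝ)) ∧
  ∃ s : Finset ℝ, (∀ q ∈ s, IsDyadic q) ∧
    ∀ x y : ↥(Set.Icc (0 : ℝ) 1), (x : ℝ) ≤ y →
      (∀ q ∈ s, q ∉ Set.Ioo (x : ℝ) (y : ℝ)) →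
      ∃ m : ℤ, ∀ t : ↥(Set.Icc (0 : ℝ) 1), (t : ℝ) ∈ Set.Icc (x : ℝ) (y : ℝ) →
        (f t : ℝ) = (f x : ℝ) + (2 : ℝ) ^ m * ((t : ℝ) - (x : ℝ))


namespace TF

section Lists
variable {X : Type*}

/-- Finite average. -/
noncomputable def av {Ω : Type*} [Fintype Ω] (φ : Ω → ℝ) : ℝ := (∑ ω, φ ω) / (Fintype.card Ω : ℝ)

section av
variable {Ω : Type*} [Fintype Ω]

lemma av_sub (φ ψ : Ω → ℝ) : av (fun ω => φ ω - ψ ω) = av φ - av ψ := by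
  simp only [av, Finset.sum_sub_distrib, sub_div]

lemma av_add (φ ψ : Ω → ℝ) : av (fun ω => φ ω + ψ ω) = av φ + av ψ := by
  simp only [av, Finset.sum_add_distrib, add_div]

lemma av_const [Nonempty Ω] (C : ℝ) : av (fun _ : Ω => C) = C := by
  have : (Fintype.card Ω : ℝ) ≠ 0 := by exact_mod_cast Fintype.card_ne_zero
  simp only [av, Finset.sum_const, Finset.card_univ, nsmul_eq_mul]
  field_simp

lemma av_mono {φ ψ : Ω → ℝ} (h : ∀ ω, φ ω ≤ ψ ω) : av φ ≤ av ψ := by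
  unfold av
  gcongr with ω
  exact h ω

lemma abs_av_le_av (φ : Ω → ℝ) : |av φ| ≤ av (fun ω => |φ ω|) := by
  unfold av
  rw [abs_div, abs_of_nonneg (show (0:ℝ) ≤ Fintype.card Ω by positivity)]
  gcongr
  exact Finset.abs_sum_le_sum_abs _ _

lemma abs_av_le [Nonempty Ω] {φ : Ω → ℝ} {C : ℝ} (h : ∀ ω, |φ ω| ≤ C) : |av φ| ≤ C :=
  (abs_av_le_av φ).trans ((av_mono h).trans (av_const C).le)

lemma av_comm {Ω' : Type*} [Fintype Ω'] (φ : Ω → Ω' → ℝ) :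
    av (fun ω => av (fun ω' => φ ω ω')) = av (fun ω' => av (fun ω => φ ω ω')) := by
  simp only [av, ← Finset.sum_div]
  rw [Finset.sum_comm, div_div, div_div, mul_comm]

lemma av_equiv {Ω' : Type*} [Fintype Ω'] (e : Ω ≃ Ω') (φ : Ω' → ℝ) :
    av (fun ω => φ (e ω)) = av φ := by
  simp only [av, Fintype.card_congr e]
  rw [e.sum_comp]

lemma av_prod {Ω' : Type*} [Fintype Ω'] (φ : Ω × Ω' → ℝ) :
    av φ = av (fun ω => av (fun ω' => φ (ω, ω'))) := by
  simp only [av, ← Finset.sum_div]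
  rw [Fintype.sum_prod_type, div_div, Fintype.card_prod, mul_comm, Nat.cast_mul]

end av

/-- The homogeneous differential on functions of lists. -/
def D : (List X → ℝ) → List X → ℝ
  | _, [] => 0
  | c, a :: L => c L - D (fun M => c (a :: M)) L

lemma D_sub (c d : List X → ℝ) (L : List X) : D (fun M => c M - d M) L = D c L - D d L := by
  induction L generalizing c d with
  | nil => simp [D]
  | cons a L ih => simp only [D, ih]; ring

lemma D_zero (L : List X) : D (fun _ => (0:ℝ)) L = 0 := by
  induction L with
  | nil => simp [D]
  | cons a L ih => simp only [D, ih]; ring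

lemma D_av {Ω : Type*} [Fintype Ω] (c : Ω → List X → ℝ) (L : List X) :
    D (fun M => av (fun ω => c ω M)) L = av (fun ω => D (c ω) L) := by
  induction L generalizing c with
  | nil => simp [D, av]
  | cons a L ih => simp only [D, ih, av_sub]

lemma D_map {Y : Type*} (σ : Y → X) (c : List X → ℝ) (L : List Y) :
    D (fun M => c (M.map σ)) L = D c (L.map σ) := by
  induction L generalizing c with
  | nil => simp [D]
  | cons a L ih => simp only [D, List.map_cons]; rw [ih (fun M => c (σ a :: M))]

section P
variable {Ω : Type*} [Fintype Ω] (Q : Ω → X → X)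

/-- Pull back by independent random copies of `Q`. -/
noncomputable def P : (List X → ℝ) → List X → ℝ
  | c, [] => c []
  | c, x :: L => av fun ω => P (fun M => c (Q ω x :: M)) L

/-- The homotopy. -/
noncomputable def h : (List X → ℝ) → List X → ℝ
  | _, [] => 0
  | c, x :: L => P Q (fun M => c (x :: M)) (x :: L) - h (fun M => c (x :: M)) L

lemma P_sub (c d : List X → ℝ) (L : List X) :
    P Q (fun M => c M - d M) L = P Q c L - P Q d L := by
  induction L generalizing c d with
  | nil => simp [P]
  | cons a L ih => simp only [P, ih, av_sub]

lemma h_sub (c d : List X → ℝ) (L : List X) :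
    h Q (fun M => c M - d M) L = h Q c L - h Q d L := by
  induction L generalizing c d with
  | nil => simp [h]
  | cons a L ih => simp only [h, ih]; rw [P_sub Q (fun M => c (a :: M)) (fun M => d (a :: M))]; ring

lemma h_zero (L : List X) : h Q (fun _ => (0:ℝ)) L = 0 := by
  have := h_sub Q (fun _ => (0:ℝ)) (fun _ => (0:ℝ)) L
  simpa using this

lemma P_zero (L : List X) : P Q (fun _ => (0:ℝ)) L = 0 := by
  have := P_sub Q (fun _ => (0:ℝ)) (fun _ => (0:ℝ)) L
  simpa using this

lemma D_P [Nonempty Ω] (c : List X → ℝ) (L : List X) : D (P Q c) L = P Q (D c) L := by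
  induction L generalizing c with
  | nil => simp [D, P]
  | cons x L ih =>
    simp only [D, P, D_av, ih]
    simp only [P_sub, av_sub, av_const]

lemma homotopy [Nonempty Ω] (c : List X → ℝ) (L : List X) :
    D (h Q c) L + h Q (D c) L = P Q c L - c L := by
  induction L generalizing c with
  | nil => simp [D, h, P]
  | cons x L ih =>
    have e1 : D (h Q c) (x :: L) = h Q c L - (P Q (fun M => c (x :: M)) L -
        P Q (D (fun M => c (x :: M))) (x :: L) - D (h Q (fun M => c (x :: M))) L) := by
      have e3 := D_P Q (fun M => c (x :: M)) (x :: L)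
      rw [D] at e3
      rw [D]
      have : (fun M => h Q c (x :: M)) =
        fun M => P Q (fun M => c (x :: M)) (x :: M) - h Q (fun M => c (x :: M)) M := by
        funext M; rw [h]
      rw [this, D_sub (fun M => P Q (fun M => c (x :: M)) (x :: M)), ← e3]
      ring
    have e2 : h Q (D c) (x :: L) = P Q c (x :: L) - P Q (D (fun M => c (x :: M))) (x :: L)
        - (h Q c L - h Q (D (fun M => c (x :: M))) L) := by
      rw [h]
      have : (fun M => D c (x :: M)) = fun M => c M - D (fun M => c (x :: M)) M := by
        funext M; rw [D]
      rw [this, P_sub, h_sub]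
    have := ih (fun M => c (x :: M))
    rw [e1, e2]
    linarith

lemma P_bound [Nonempty Ω] {c : List X → ℝ} {C : ℝ} (hc : ∀ L, |c L| ≤ C) (L : List X) :
    |P Q c L| ≤ C := by
  induction L generalizing c with
  | nil => exact hc _
  | cons x L ih => rw [P]; exact abs_av_le fun ω => ih fun M => hc _

lemma h_bound [Nonempty Ω] {c : List X → ℝ} {C : ℝ} (hc : ∀ L, |c L| ≤ C) (L : List X) :
    |h Q c L| ≤ L.length * C := by
  induction L generalizing c with
  | nil => simp [h]
  | cons x L ih =>
    rw [h]
    refine (abs_sub _ _).trans ?_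
    have := P_bound Q (c := fun M => c (x :: M)) (fun M => hc _) (x :: L)
    have := ih (c := fun M => c (x :: M)) (fun M => hc _)
    push_cast [List.length_cons]
    linarith

lemma P_map (σ : X → X) (hσ : ∀ ω x, Q ω (σ x) = σ (Q ω x)) (c : List X → ℝ) (L : List X) :
    P Q c (L.map σ) = P Q (fun M => c (M.map σ)) L := by
  induction L generalizing c with
  | nil => simp [P]
  | cons x L ih => simp only [P, List.map_cons, hσ, ih]

lemma h_map (σ : X → X) (hσ : ∀ ω x, Q ω (σ x) = σ (Q ω x)) (c : List X → ℝ) (L : List X) :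
    h Q c (L.map σ) = h Q (fun M => c (M.map σ)) L := by
  induction L generalizing c with
  | nil => simp [h]
  | cons x L ih =>
    simp only [h, List.map_cons, ih]
    rw [← List.map_cons, P_map Q σ hσ]

lemma P_ofFn {l : ℕ} (c : List X → ℝ) (x : Fin l → X) :
    P Q c (List.ofFn x) = av (fun ω : Fin l → Ω => c (List.ofFn fun j => Q (ω j) (x j))) := by
  induction l generalizing c with
  | zero => simp [P, av]
  | succ l ih =>
    rw [List.ofFn_succ, P]
    simp only [ih]
    rw [← av_equiv (Fin.consEquiv (fun _ : Fin (l+1) => Ω)), av_prod]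
    simp [Fin.consEquiv, List.ofFn_succ]

/-- A cocycle is cobounded by `P c (x₀ :: ·) - h c`. -/
lemma cobound [Nonempty Ω] (c : List X → ℝ) (hc : ∀ L, D c L = 0) (x₀ : X) (L : List X) :
    D (fun M => P Q c (x₀ :: M) - h Q c M) L = c L := by
  have hc' : D c = fun _ => 0 := funext hc
  have e1 := homotopy Q c L
  have e2 := D_P Q c (x₀ :: L)
  rw [hc', h_zero] at e1
  rw [hc', P_zero, D] at e2
  rw [D_sub (fun M => P Q c (x₀ :: M))]
  linarith

end P

lemma D_ofFn {m : ℕ} (c : List X → ℝ) (x : Fin (m+1) → X) :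
    D c (List.ofFn x) = ∑ k : Fin (m+1), (-1 : ℝ) ^ (k : ℕ) * c (List.ofFn (x ∘ k.succAbove)) := by
  induction m generalizing c with
  | zero => simp [D]
  | succ m ih =>
    rw [List.ofFn_succ, D, ih, Fin.sum_univ_succ (n := m + 1)]
    simp only [Fin.succAbove_zero, Fin.val_zero, pow_zero, one_mul, Fin.val_succ, pow_succ,
      sub_eq_add_neg]
    congr 1
    rw [← Finset.sum_neg_distrib]
    refine Finset.sum_congr rfl fun k _ => ?_
    rw [List.ofFn_succ (f := x ∘ k.succ.succAbove)]
    simp only [Function.comp_apply, Fin.succ_succAbove_zero, Fin.succ_succAbove_succ]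
    ring_nf
    rfl

end Lists

section Limit
variable {Γ : Type*} [Group Γ]

/-- Compactness. -/
lemma limit_lemma (c B : List Γ → ℝ) (Λ : Set Γ)
    (H : ∀ (J : Finset (Λ × List Γ)) (ε : ℝ), 0 < ε → ∃ b : List Γ → ℝ,
      (∀ L, |b L| ≤ B L) ∧ (∀ L, D b L = c L) ∧
      ∀ q ∈ J, |b (q.2.map ((q.1 : Γ) * ·)) - b q.2| ≤ ε) :
    ∃ b : List Γ → ℝ, (∀ L, |b L| ≤ B L) ∧ (∀ L, D b L = c L) ∧
      ∀ g ∈ Λ, ∀ L, b (L.map (g * ·)) = b L := by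
  have H' : ∀ i : Finset (Λ × List Γ) × ℕ, ∃ b : List Γ → ℝ,
      (∀ L, |b L| ≤ B L) ∧ (∀ L, D b L = c L) ∧
      ∀ q ∈ i.1, |b (q.2.map ((q.1 : Γ) * ·)) - b q.2| ≤ 1 / ((i.2 : ℝ) + 1) :=
    fun i => H i.1 _ (by positivity)
  choose b hb1 hb2 hb3 using H'
  classical
  let U : Ultrafilter (Finset (Λ × List Γ) × ℕ) := Ultrafilter.of Filter.atTop
  have hU : (U : Filter (Finset (Λ × List Γ) × ℕ)) ≤ Filter.atTop := Ultrafilter.of_le Filter.atTop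
  have ex : ∀ L, ∃ r ∈ Set.Icc (-B L) (B L), Filter.Tendsto (fun i => b i L) U (nhds r) := by
    intro L
    have := (isCompact_Icc (a := -B L) (b := B L)).ultrafilter_le_nhds (U.map (fun i => b i L))
      (by
        rw [Filter.le_principal_iff]
        exact Filter.mem_map.2 (Filter.univ_mem' fun i => abs_le.1 (hb1 i L)))
    exact this
  choose r hr1 hr2 using ex
  refine ⟨r, fun L => abs_le.2 (hr1 L), ?_, ?_⟩
  · intro L
    have key : ∀ (L : List Γ) (f : Finset (Λ × List Γ) × ℕ → List Γ → ℝ) (s : List Γ → ℝ),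
        (∀ L, Filter.Tendsto (fun i => f i L) U (nhds (s L))) →
        Filter.Tendsto (fun i => D (f i) L) U (nhds (D s L)) := by
      intro L
      induction L with
      | nil => intro f s _; simpa [D] using tendsto_const_nhds
      | cons a L ih =>
        intro f s hf
        simp only [D]
        exact (hf L).sub (ih (fun i M => f i (a :: M)) _ fun M => hf _)
    have h1 := key L b r hr2
    simp only [hb2] at h1
    exact tendsto_nhds_unique h1 tendsto_const_nhds
  · intro g hg L
    have h1 := (hr2 (L.map (g * ·))).sub (hr2 L)
    have h2 : Filter.Tendsto (fun i => b i (L.map (g * ·)) - b i L) U (nhds 0) := by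
      rw [tendsto_zero_iff_abs_tendsto_zero]
      have h3 : Filter.Tendsto (fun i : Finset (Λ × List Γ) × ℕ => 1 / ((i.2 : ℝ) + 1)) U
          (nhds 0) := by
        have := (tendsto_one_div_add_atTop_nhds_zero_nat (𝕜 := ℝ)).comp
          (Filter.tendsto_snd (f := (Filter.atTop : Filter (Finset (Λ × List Γ))))
            (g := (Filter.atTop : Filter ℕ)))
        rw [Filter.prod_atTop_atTop_eq] at this
        exact this.mono_left hU
      refine tendsto_of_tendsto_of_tendsto_of_le_of_le' tendsto_const_nhds h3
        (Filter.Eventually.of_forall fun i => abs_nonneg _) ?_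
      have : ∀ᶠ i in (Filter.atTop : Filter (Finset (Λ × List Γ) × ℕ)),
          ({((⟨g, hg⟩ : Λ), L)}, 0) ≤ i := Filter.eventually_ge_atTop _
      filter_upwards [hU this] with i hi
      exact hb3 i ((⟨g, hg⟩ : Λ), L) (hi.1 (Finset.mem_singleton_self _))
    exact sub_eq_zero.1 (tendsto_nhds_unique h1 h2)

end Limit

section Shift

/-- Shifting a finite average. -/
lemma av_shift (K a : ℕ) (φ : ℕ → ℝ) (C : ℝ) (hφ : ∀ k, |φ k| ≤ C) :
    |av (fun k : Fin (K+1) => φ (k + a)) - av (fun k : Fin (K+1) => φ k)| ≤ a * (2 * C / (K + 1)) := by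
  induction a with
  | zero => simp
  | succ a ih =>
    have h1 : |av (fun k : Fin (K+1) => φ (k + (a + 1))) - av (fun k : Fin (K+1) => φ (k + a))|
        ≤ 2 * C / (K + 1) := by
      have e : (∑ k : Fin (K+1), φ (k + (a+1))) - ∑ k : Fin (K+1), φ (k + a)
          = φ (K + 1 + a) - φ a := by
        have e1 := Fin.sum_univ_eq_sum_range (fun k => φ (k + (a+1))) (K+1)
        have e2 := Fin.sum_univ_eq_sum_range (fun k => φ (k + a)) (K+1)
        rw [e1, e2, ← Finset.sum_sub_distrib]
        have := Finset.sum_range_sub (fun k => φ (k + a)) (K+1)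
        simp only [zero_add] at this
        rw [← this]
        refine Finset.sum_congr rfl fun k _ => ?_
        rw [show k + (a + 1) = k + 1 + a by ring]
      unfold av
      rw [← sub_div, e, abs_div, Fintype.card_fin]
      push_cast
      rw [abs_of_nonneg (show (0:ℝ) ≤ (K:ℝ) + 1 by positivity)]
      gcongr
      have := abs_sub (φ (K+1+a)) (φ a)
      linarith [hφ (K+1+a), hφ a]
    have := abs_sub_le (av (fun k : Fin (K+1) => φ (k + (a + 1)))) (av (fun k : Fin (K+1) => φ (k + a)))
      (av (fun k : Fin (K+1) => φ k))
    push_cast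
    linarith

lemma tendsto_shift (A : ℝ) : Filter.Tendsto (fun K : ℕ => A / ((K : ℝ) + 1)) Filter.atTop (nhds 0) := by
  have := (tendsto_one_div_add_atTop_nhds_zero_nat (𝕜 := ℝ)).const_mul A
  simpa [div_eq_mul_inv] using this

end Shift

section Normal
variable {Γ : Type*} [Group Γ]

/-- Extending invariance over a cyclic extension. -/
lemma extend_cyclic (c B : List Γ → ℝ) (hcinv : ∀ g L, c (L.map (g * ·)) = c L)
    (hB : ∀ g L, B (L.map (g * ·)) = B L)
    (Λ : Set Γ) (u : Γ) (hu : ∀ f ∈ Λ, ∀ i : ℕ, u ^ i * f * (u ^ i)⁻¹ ∈ Λ)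
    (b : List Γ → ℝ) (hb1 : ∀ L, |b L| ≤ B L) (hb2 : ∀ L, D b L = c L)
    (hb3 : ∀ g ∈ Λ, ∀ L, b (L.map (g * ·)) = b L) :
    ∃ b : List Γ → ℝ, (∀ L, |b L| ≤ B L) ∧ (∀ L, D b L = c L) ∧
      ∀ g ∈ insert u Λ, ∀ L, b (L.map (g * ·)) = b L := by
  apply limit_lemma
  intro J ε hε
  have hK : ∀ᶠ K : ℕ in Filter.atTop, ∀ q ∈ J, 2 * B q.2 / ((K : ℝ) + 1) < ε := by
    rw [Filter.eventually_all_finset]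
    intro q _
    exact (tendsto_shift _).eventually (gt_mem_nhds hε)
  obtain ⟨K, hK⟩ := hK.exists
  have hcomp : ∀ (g k : Γ) (L : List Γ), (L.map (g * ·)).map (k * ·) = L.map (k * g * ·) := by
    intro g k L; simp [List.map_map, Function.comp_def, mul_assoc]
  refine ⟨fun L => av fun k : Fin (K+1) => b (L.map (u ^ (k : ℕ) * ·)), ?_, ?_, ?_⟩
  · intro L
    refine abs_av_le fun k => ?_
    rw [← hB (u ^ (k : ℕ)) L]
    exact hb1 _
  · intro L
    rw [D_av (fun (k : Fin (K+1)) L => b (L.map (u ^ (k : ℕ) * ·)))]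
    simp only [D_map, hb2, hcinv, av_const]
  · rintro ⟨⟨g, hg⟩, L⟩ hq
    have hK' := hK _ hq
    simp only at hK' ⊢
    simp only [hcomp]
    rcases hg with rfl | hg
    · have := av_shift K 1 (fun k => b (L.map (g ^ k * ·))) (B L) (by
        intro k
        rw [← hB (g ^ k) L]
        exact hb1 _)
      simp only [pow_succ] at this
      refine this.trans ?_
      push_cast
      linarith
    · have : ∀ k : ℕ, b (L.map (u ^ k * g * ·)) = b (L.map (u ^ k * ·)) := by
        intro k
        rw [← hb3 _ (hu g hg k) (L.map (u ^ k * ·)), hcomp]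
        simp
      simp only [this, sub_self, abs_zero]
      exact hε.le

end Normal

section LLN
variable {S : Type*} [Fintype S] [DecidableEq S]

lemma sum_sq_zero (y : S → ℝ) (hy : ∑ s, y s = 0) (M : ℕ) :
    (∑ z : Fin M → S, (∑ a, y (z a))) = 0 ∧
    (∑ z : Fin M → S, (∑ a, y (z a)) ^ 2) * (Fintype.card S : ℝ)
      = M * (Fintype.card S : ℝ) ^ M * ∑ s, y s ^ 2 := by
  induction M with
  | zero => simp
  | succ M ih =>
    obtain ⟨ih1, ih2⟩ := ih
    have e : ∀ φ : (Fin (M+1) → S) → ℝ, ∑ z, φ z = ∑ s : S, ∑ z : Fin M → S, φ (Fin.cons s z) := by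
      intro φ
      rw [← (Fin.consEquiv (fun _ : Fin (M+1) => S)).sum_comp, Fintype.sum_prod_type]
      rfl
    constructor
    · rw [e]
      simp only [Fin.sum_univ_succ, Fin.cons_zero, Fin.cons_succ, Finset.sum_add_distrib, ih1]
      simp [← Finset.mul_sum, hy]
    · rw [e]
      simp only [Fin.sum_univ_succ, Fin.cons_zero, Fin.cons_succ, add_sq, Finset.sum_add_distrib,
        ← Finset.mul_sum, ih1]
      simp only [Finset.sum_const, Finset.card_univ, Fintype.card_fun, Fintype.card_fin,
        nsmul_eq_mul, ← Finset.mul_sum, mul_zero, add_zero, add_mul]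
      rw [mul_assoc (Fintype.card S : ℝ), ih2]
      push_cast
      ring

lemma sum_update {M : ℕ} (α : (Fin M → S) → ℝ) (a : Fin M) (s : S) :
    ∑ z : Fin M → S, α (Function.update z a s) =
      (Fintype.card S : ℝ) * ∑ z : Fin M → S, α z * (if z a = s then 1 else 0) := by
  have h1 : ∀ z : Fin M → S, α (Function.update z a s) =
      ∑ w : Fin M → S, if w = Function.update z a s then α w else 0 := by
    intro z; simp
  simp only [h1]
  rw [Finset.sum_comm, Finset.mul_sum]
  refine Finset.sum_congr rfl fun w _ => ?_
  rw [← Finset.sum_filter, Finset.sum_const, nsmul_eq_mul]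
  by_cases hw : w a = s
  · have : (Finset.univ.filter fun z : Fin M → S => w = Function.update z a s).card = Fintype.card S := by
      rw [← Finset.card_univ]
      symm
      refine Finset.card_bij (fun s' _ => Function.update w a s') ?_ ?_ ?_
      · intro s' _
        simp [← hw]
      · intro s1 _ s2 _ h12
        have := congrFun h12 a
        simpa using this
      · intro z hz
        refine ⟨z a, Finset.mem_univ _, ?_⟩
        rw [(Finset.mem_filter.1 hz).2]
        simp
    rw [this, if_pos hw]; ring
  · have : (Finset.univ.filter fun z : Fin M → S => w = Function.update z a s) = ∅ := by
      apply Finset.filter_eq_empty_iff.2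
      intro z _ h
      apply hw; rw [h]; simp
    rw [this, if_neg hw]; simp

/-- The weak law of large numbers, in the form we need. -/
lemma lln (s s' : S) (C : ℝ) (hC : 0 ≤ C) (ε : ℝ) (hε : 0 < ε) :
    ∀ᶠ M : ℕ in Filter.atTop, ∀ α : (Fin (M+1) → S) → ℝ, (∀ z, |α z| ≤ C) →
      |av (fun a : Fin (M+1) => av (fun z => α (Function.update z a s))
        - av (fun z => α (Function.update z a s')))| ≤ ε := by
  have : Nonempty S := ⟨s⟩
  set N : ℝ := (Fintype.card S : ℝ) with hN
  have hN0 : 0 < N := by rw [hN]; exact_mod_cast Fintype.card_pos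
  -- bound : N*C*(η + 2/(N (M+1) η))
  set η : ℝ := ε / (2 * (N * C + 1)) with hη
  have hη0 : 0 < η := by positivity
  have hlim : ∀ᶠ M : ℕ in Filter.atTop, (N * C * (2 / (N * η))) / ((M : ℝ) + 1) < ε / 2 :=
    (tendsto_shift _).eventually (gt_mem_nhds (by positivity))
  filter_upwards [hlim] with M hM α hα
  let y : S → ℝ := fun σ => (if σ = s then 1 else 0) - (if σ = s' then 1 else 0)
  have hy : ∑ σ, y σ = 0 := by simp [y]
  have hy2 : ∑ σ, y σ ^ 2 ≤ 2 := by
    have : ∀ σ, y σ ^ 2 ≤ (if σ = s then 1 else 0) + (if σ = s' then 1 else 0) := by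
      intro σ; simp only [y]; split_ifs <;> norm_num
    refine (Finset.sum_le_sum fun σ _ => this σ).trans ?_
    rw [Finset.sum_add_distrib]
    simp; norm_num
  have hsq := (sum_sq_zero y hy (M+1)).2
  rw [← hN] at hsq
  have e1 : av (fun a : Fin (M+1) => av (fun z => α (Function.update z a s))
        - av (fun z => α (Function.update z a s'))) =
      N * (∑ z : Fin (M+1) → S, α z * (∑ a, y (z a))) / (N ^ (M+1) * ((M:ℝ)+1)) := by
    simp only [av, sum_update, Fintype.card_fin, Fintype.card_fun, ← hN, ← sub_div, ← mul_sub,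
      ← Finset.sum_sub_distrib, ← Finset.sum_div, ← Finset.mul_sum]
    rw [Finset.sum_comm, div_div]
    push_cast
    rw [← hN]
    congr 2
    refine Finset.sum_congr rfl fun z _ => ?_
    simp only [y, Finset.mul_sum]
  rw [e1, abs_div, abs_mul, abs_of_pos hN0, abs_of_pos (show 0 < N ^ (M+1) * ((M:ℝ)+1) by positivity)]
  have hM1 : (0:ℝ) < (M:ℝ) + 1 := by positivity
  have e2 : |∑ z : Fin (M+1) → S, α z * (∑ a, y (z a))| ≤
      C * (N ^ (M+1) * ((M:ℝ)+1) * η + (∑ z : Fin (M+1) → S, (∑ a, y (z a)) ^ 2) / (((M:ℝ)+1) * η)) := by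
    refine (Finset.abs_sum_le_sum_abs _ _).trans ?_
    have : ∀ z : Fin (M+1) → S, |α z * (∑ a, y (z a))| ≤
        C * (((M:ℝ)+1) * η + (∑ a, y (z a)) ^ 2 / (((M:ℝ)+1) * η)) := by
      intro z
      rw [abs_mul]
      gcongr
      · exact hα z
      · set Y := ∑ a, y (z a)
        have hp : 0 < ((M:ℝ)+1) * η := by positivity
        set q := ((M:ℝ)+1) * η
        rw [← sub_nonneg]
        have : q + Y ^ 2 / q - |Y| = (q ^ 2 + |Y| ^ 2 - q * |Y|) / q := by
          rw [sq_abs]; field_simp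
        rw [this]
        apply div_nonneg _ hp.le
        nlinarith [sq_nonneg (q - |Y|), abs_nonneg Y]
    refine (Finset.sum_le_sum fun z _ => this z).trans ?_
    rw [← Finset.mul_sum, Finset.sum_add_distrib, ← Finset.sum_div]
    simp only [Finset.sum_const, Finset.card_univ, Fintype.card_fun, Fintype.card_fin, nsmul_eq_mul]
    push_cast
    rw [← hN, mul_assoc]
  have e3 : (∑ z : Fin (M+1) → S, (∑ a, y (z a)) ^ 2) ≤ ((M:ℝ)+1) * N ^ (M+1) * 2 / N := by
    rw [le_div_iff₀ hN0, hsq]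
    push_cast
    gcongr
  have e4 : N * |∑ z : Fin (M+1) → S, α z * (∑ a, y (z a))| / (N ^ (M+1) * ((M:ℝ)+1)) ≤
      N * (C * (N ^ (M+1) * ((M:ℝ)+1) * η + (((M:ℝ)+1) * N ^ (M+1) * 2 / N) / (((M:ℝ)+1) * η)))
       / (N ^ (M+1) * ((M:ℝ)+1)) := by
    gcongr
    exact e2.trans (by gcongr)
  refine e4.trans ?_
  have e5 : N * (C * (N ^ (M+1) * ((M:ℝ)+1) * η + (((M:ℝ)+1) * N ^ (M+1) * 2 / N) / (((M:ℝ)+1) * η)))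
       / (N ^ (M+1) * ((M:ℝ)+1)) = N * C * η + (N * C * (2 / (N * η))) / ((M : ℝ) + 1) := by
    field_simp
  rw [e5]
  have e6 : N * C * η ≤ ε / 2 := by
    have : 0 ≤ N * C := by positivity
    rw [hη, mul_div_assoc', div_le_div_iff₀ (by positivity) (by positivity)]
    nlinarith
  linarith

end LLN

section Lamp
variable {Γ : Type*} [Group Γ]

/-- Right multiplication by small powers of `t`. -/
def Q1 (t : Γ) (K : ℕ) : Fin (K+1) → Γ → Γ := fun k x => x * t ^ (k : ℕ)

lemma P_shift (t : Γ) (K a : ℕ) {C : ℝ} (c : List Γ → ℝ) (hc : ∀ L, |c L| ≤ C) (L : List Γ) :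
    |P (Q1 t K) c (L.map (· * t ^ a)) - P (Q1 t K) c L| ≤ L.length * (a * (2 * C / (K + 1))) := by
  induction L generalizing c with
  | nil => simp
  | cons x L ih =>
    simp only [List.map_cons, P]
    have h1 := av_shift K a (fun k => P (Q1 t K) (fun M => c (x * t ^ k :: M)) (L.map (· * t ^ a))) C
      (fun k => P_bound _ (fun M => hc _) _)
    have h2 : |av (fun k : Fin (K+1) =>
        P (Q1 t K) (fun M => c (x * t ^ (k : ℕ) :: M)) (L.map (· * t ^ a)) -
        P (Q1 t K) (fun M => c (x * t ^ (k : ℕ) :: M)) L)| ≤ L.length * (a * (2 * C / (K + 1))) :=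
      abs_av_le fun k => ih _ fun M => hc _
    rw [av_sub] at h2
    have h3 : ∀ k : ℕ, x * t ^ a * t ^ k = x * t ^ (k + a) := by
      intro k; rw [mul_assoc, ← pow_add, add_comm]
    have h4 : ∀ (k : Fin (K+1)) (y : Γ), Q1 t K k y = y * t ^ (k : ℕ) := fun _ _ => rfl
    simp only [h4, h3] at h1 h2 ⊢
    have := abs_sub_le (av fun k : Fin (K+1) => P (Q1 t K)
        (fun M => c (x * t ^ ((k : ℕ) + a) :: M)) (L.map (· * t ^ a)))
      (av fun k : Fin (K+1) => P (Q1 t K)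
        (fun M => c (x * t ^ (k : ℕ) :: M)) (L.map (· * t ^ a)))
      (av fun k : Fin (K+1) => P (Q1 t K)
        (fun M => c (x * t ^ (k : ℕ) :: M)) L)
    push_cast [List.length_cons]
    linarith

/-- The product of the conjugates `t^i z_i t^{-i}`. -/
def iota (t : Γ) : (M : ℕ) → (Fin M → Γ) → Γ
  | 0, _ => 1
  | M + 1, z => z 0 * (t * iota t M (Fin.tail z) * t⁻¹)

lemma iota_update (t : Γ) (G : Subgroup Γ)
    (hcomm : ∀ g ∈ G, ∀ k ∈ G, ∀ i : ℕ, Commute g (t ^ (i+1) * k * (t ^ (i+1))⁻¹))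
    (M : ℕ) (z : Fin M → Γ) (hz : ∀ i, z i ∈ G) (a : Fin M) (g s : Γ) (hg : g ∈ G) :
    iota t M (Function.update z a (g * s)) =
      t ^ (a : ℕ) * g * (t ^ (a : ℕ))⁻¹ * iota t M (Function.update z a s) := by
  induction M with
  | zero => exact a.elim0
  | succ M ih =>
    induction a using Fin.cases with
    | zero => simp [iota, mul_assoc]
    | succ a =>
      simp only [iota, Fin.tail_update_succ]
      rw [ih (Fin.tail z) (fun i => hz _) a]
      rw [Function.update_of_ne (Fin.succ_ne_zero a).symm,
        Function.update_of_ne (Fin.succ_ne_zero a).symm]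
      have h1 := (hcomm (z 0) (hz 0) g hg a).eq
      rw [Fin.val_succ, ← mul_assoc (t ^ ((a:ℕ)+1) * g * (t ^ ((a:ℕ)+1))⁻¹) (z 0), ← h1]
      rw [pow_succ']
      group

/-- The random equivariant maps. -/
def Q2 (t : Γ) (p : Γ → Γ) (S : Finset Γ) (M : ℕ) (a : Fin (M+1)) : (Fin (M+1) → S) → Γ → Γ :=
  fun z x => (t ^ (a : ℕ))⁻¹ * iota t (M+1) (Function.update (fun i => (z i : Γ)) a (p x)) * t ^ (a : ℕ)

lemma Q2_equivariant (t : Γ) (G : Subgroup Γ)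
    (hcomm : ∀ g ∈ G, ∀ k ∈ G, ∀ i : ℕ, Commute g (t ^ (i+1) * k * (t ^ (i+1))⁻¹))
    (p : Γ → Γ) (hp : ∀ g ∈ G, ∀ x, p (g * x) = g * p x) (S : Finset Γ) (hS : ∀ s ∈ S, s ∈ G)
    (M : ℕ) (a : Fin (M+1)) (z : Fin (M+1) → S) (g : Γ) (hg : g ∈ G) (x : Γ) :
    Q2 t p S M a z (g * x) = g * Q2 t p S M a z x := by
  unfold Q2
  rw [hp g hg, iota_update t G hcomm _ _ (fun i => hS _ (z i).2) a g _ hg]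
  group

lemma core (t : Γ) (p : Γ → Γ) (S : Finset Γ) (M : ℕ) (a : Fin (M+1)) (c : List Γ → ℝ)
    (hinv : ∀ g L, c (L.map (g * ·)) = c L) (l : ℕ) (hne : S.Nonempty) (η : ℝ)
    (hη : ∀ L : List Γ, L.length = l → |c (L.map (· * t ^ (a : ℕ))) - c L| ≤ η)
    (x : Fin l → Γ) (s : Fin l → S) (hs : ∀ j, (s j : Γ) = p (x j)) :
    |P (Q2 t p S M a) c (List.ofFn x) - av (fun z : Fin (M+1) → (Fin l → S) =>
      (fun z : Fin (M+1) → (Fin l → S) => c (List.ofFn fun j => iota t (M+1) (fun i => (z i j : Γ))))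
        (Function.update z a s))| ≤ η := by
  have : Nonempty S := hne.to_subtype
  rw [P_ofFn, ← av_equiv (Equiv.piComm (fun (_ : Fin (M+1)) (_ : Fin l) => (S : Type _))), ← av_sub]
  refine abs_av_le fun z => ?_
  have e1 : ∀ j, Function.update (fun i => (z i j : Γ)) a (p (x j)) =
      fun i => (Function.update z a s i j : Γ) := by
    intro j; funext i
    by_cases hi : i = a
    · subst hi; simp [hs]
    · simp [hi]
  have e2 : (List.ofFn fun j => Q2 t p S M a (Equiv.piComm (fun (_ : Fin (M+1)) (_ : Fin l) => (S : Type _)) z j) (x j))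
      = ((List.ofFn fun j => iota t (M+1) (fun i => (Function.update z a s i j : Γ))).map
          (· * t ^ (a : ℕ))).map ((t ^ (a : ℕ))⁻¹ * ·) := by
    rw [List.map_ofFn, List.map_ofFn]
    congr 1
    funext j
    simp only [Function.comp_apply, Q2, ← e1]
    rw [mul_assoc]
    rfl
  rw [e2, hinv]
  exact hη _ (by simp)

lemma exists_proj (G : Subgroup Γ) : ∃ p : Γ → Γ, (∀ x, p x ∈ G) ∧
    ∀ g ∈ G, ∀ x, p (g * x) = g * p x := by
  let q : Γ → Quotient (QuotientGroup.rightRel G) := fun x => Quotient.mk _ x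
  refine ⟨fun x => x * ((q x).out)⁻¹, ?_, ?_⟩
  · intro x
    have : (QuotientGroup.rightRel G) ((q x).out) x := Quotient.exact (Quotient.out_eq (q x))
    exact QuotientGroup.rightRel_apply.1 this
  · intro g hg x
    have : q (g * x) = q x := by
      apply Quotient.sound
      apply QuotientGroup.rightRel_apply.2
      simpa using G.inv_mem hg
    simp only [this, mul_assoc]

lemma lamplighter (c : List Γ → ℝ) (C : ℝ) (hc : ∀ L, |c L| ≤ C) (hD : ∀ L, D c L = 0)
    (hinv : ∀ g L, c (L.map (g * ·)) = c L) (G : Subgroup Γ) (t : Γ)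
    (hcomm : ∀ g ∈ G, ∀ k ∈ G, ∀ i : ℕ, Commute g (t ^ (i+1) * k * (t ^ (i+1))⁻¹))
    (J : Finset (Γ × List Γ)) (hJ : ∀ q ∈ J, q.1 ∈ G) (ε : ℝ) (hε : 0 < ε) :
    ∃ b : List Γ → ℝ, (∀ L, |b L| ≤ C + 2 * (L.length * C)) ∧ (∀ L, D b L = c L) ∧
      ∀ q ∈ J, |b (q.2.map (q.1 * ·)) - b q.2| ≤ ε := by
  classical
  have hC : 0 ≤ C := (abs_nonneg _).trans (hc [])
  obtain ⟨p, hpG, hp⟩ := exists_proj G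
  let S : Finset Γ := insert (p 1)
    (J.biUnion fun q => ((q.2 ++ q.2.map (q.1 * ·)).map p).toFinset)
  have hSG : ∀ s ∈ S, s ∈ G := by
    intro s hs
    simp only [S, Finset.mem_insert, Finset.mem_biUnion, List.mem_toFinset, List.mem_map] at hs
    rcases hs with rfl | ⟨q, _, x, _, rfl⟩ <;> exact hpG _
  have hSne : S.Nonempty := ⟨_, Finset.mem_insert_self _ _⟩
  have : Nonempty S := hSne.to_subtype
  have hS1 : p 1 ∈ S := Finset.mem_insert_self _ _
  have hS2 : ∀ q ∈ J, ∀ x ∈ q.2, p x ∈ S := by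
    intro q hq x hx
    apply Finset.mem_insert_of_mem
    rw [Finset.mem_biUnion]
    exact ⟨q, hq, List.mem_toFinset.2 (List.mem_map_of_mem (List.mem_append_left _ hx))⟩
  have hS3 : ∀ q ∈ J, ∀ x ∈ q.2, p (q.1 * x) ∈ S := by
    intro q hq x hx
    apply Finset.mem_insert_of_mem
    rw [Finset.mem_biUnion]
    exact ⟨q, hq, List.mem_toFinset.2 (List.mem_map_of_mem (List.mem_append_right _
      (List.mem_map_of_mem (f := (q.1 * ·)) hx)))⟩
  -- choice of `M`
  have hM : ∀ᶠ M : ℕ in Filter.atTop, ∀ q ∈ J, ∀ s s' : Fin (q.2.length + 1) → S,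
      ∀ α : (Fin (M+1) → (Fin (q.2.length + 1) → S)) → ℝ, (∀ z, |α z| ≤ C) →
      |av (fun a : Fin (M+1) => av (fun z => α (Function.update z a s))
        - av (fun z => α (Function.update z a s')))| ≤ ε / 2 := by
    rw [Filter.eventually_all_finset]
    intro q _
    rw [Filter.eventually_all]
    intro s
    rw [Filter.eventually_all]
    intro s'
    exact lln s s' C hC (ε / 2) (by positivity)
  obtain ⟨M, hM⟩ := hM.exists
  have hK : ∀ᶠ K : ℕ in Filter.atTop, ∀ q ∈ J,
      (((q.2.length : ℝ) + 1) * (M * (2 * C))) / ((K : ℝ) + 1) < ε / 4 := by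
    rw [Filter.eventually_all_finset]
    intro q _
    exact (tendsto_shift _).eventually (gt_mem_nhds (by positivity))
  obtain ⟨K, hK⟩ := hK.exists
  set c' := P (Q1 t K) c with hc'
  have hc'b : ∀ L, |c' L| ≤ C := P_bound _ hc
  have hc'D : ∀ L, D c' L = 0 := by
    intro L
    rw [hc', D_P, show D c = fun _ => 0 from funext hD, P_zero]
  have hQ1 : ∀ (g : Γ) (k : Fin (K+1)) (x : Γ), Q1 t K k (g * x) = g * Q1 t K k x := by
    intro g k x; simp [Q1, mul_assoc]
  have hc'inv : ∀ g L, c' (L.map (g * ·)) = c' L := by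
    intro g L
    rw [hc', P_map _ _ (hQ1 g)]
    simp only [hinv]
  refine ⟨fun L => av (fun a : Fin (M+1) => P (Q2 t p S M a) c' (1 :: L) - h (Q2 t p S M a) c' L)
    - h (Q1 t K) c L, ?_, ?_, ?_⟩
  · intro L
    have h1 := h_bound (Q1 t K) hc L
    have h2 : |av (fun a : Fin (M+1) => P (Q2 t p S M a) c' (1 :: L) - h (Q2 t p S M a) c' L)|
        ≤ C + L.length * C := by
      refine abs_av_le fun a => ?_
      have h3 := h_bound (Q2 t p S M a) hc'b L
      have h4 := P_bound (Q2 t p S M a) hc'b (1 :: L)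
      exact (abs_sub _ _).trans (by linarith)
    exact (abs_sub _ _).trans (by linarith)
  · intro L
    rw [D_sub (fun L => av (fun a : Fin (M+1) =>
      P (Q2 t p S M a) c' (1 :: L) - h (Q2 t p S M a) c' L)),
      D_av (fun (a : Fin (M+1)) L => P (Q2 t p S M a) c' (1 :: L) - h (Q2 t p S M a) c' L)]
    simp only [cobound _ c' hc'D, av_const]
    have := homotopy (Q1 t K) c L
    rw [show D c = fun _ => 0 from funext hD, h_zero] at this
    rw [hc']
    linarith
  · rintro ⟨g, L⟩ hq
    have hg : g ∈ G := hJ _ hq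
    have hKq := hK _ hq
    have hMq := hM _ hq
    have hS2q := hS2 _ hq
    have hS3q := hS3 _ hq
    simp only at hKq hMq hS2q hS3q ⊢
    have e1 : h (Q1 t K) c (L.map (g * ·)) = h (Q1 t K) c L := by
      rw [h_map _ _ (hQ1 g)]; simp only [hinv]
    have e2 : ∀ a, h (Q2 t p S M a) c' (L.map (g * ·)) = h (Q2 t p S M a) c' L := by
      intro a
      rw [h_map _ _ (fun z x => Q2_equivariant t G hcomm p hp S hSG M a z g hg x)]
      simp only [hc'inv]
    simp only [e1, e2]
    -- the lists
    let x : Fin (L.length + 1) → Γ := Fin.cons 1 L.get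
    let x' : Fin (L.length + 1) → Γ := Fin.cons 1 (fun j => g * L.get j)
    have hx : 1 :: L = List.ofFn x := by
      simp [x, List.ofFn_succ]
    have hx' : 1 :: L.map (g * ·) = List.ofFn x' := by
      simp only [x', List.ofFn_succ, Fin.cons_zero, Fin.cons_succ]
      congr 1
      conv_lhs => rw [← List.ofFn_get L, List.map_ofFn]
      rfl
    have hs : ∀ j, p (x j) ∈ S := by
      intro j
      induction j using Fin.cases with
      | zero => exact hS1
      | succ j => exact hS2q _ (List.get_mem _ _)
    have hs' : ∀ j, p (x' j) ∈ S := by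
      intro j
      induction j using Fin.cases with
      | zero => exact hS1
      | succ j => exact hS3q _ (List.get_mem _ _)
    have hη : ∀ (a : Fin (M+1)) (N : List Γ), N.length = L.length + 1 →
        |c' (N.map (· * t ^ (a : ℕ))) - c' N| ≤ ε / 4 := by
      intro a N hN
      refine (P_shift t K a c hc N).trans (le_trans ?_ hKq.le)
      rw [hN]
      push_cast
      rw [← mul_div_assoc, ← mul_div_assoc]
      have : ((a : ℕ) : ℝ) ≤ M := by exact_mod_cast Nat.lt_succ_iff.1 a.2
      gcongr
    have c1 := fun a => core t p S M a c' hc'inv _ hSne _ (hη a) x (fun j => ⟨p (x j), hs j⟩) (fun j => rfl)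
    have c2 := fun a => core t p S M a c' hc'inv _ hSne _ (hη a) x' (fun j => ⟨p (x' j), hs' j⟩) (fun j => rfl)
    have c3 := hMq (fun j => ⟨p (x' j), hs' j⟩) (fun j => ⟨p (x j), hs j⟩)
      (fun z => c' (List.ofFn fun j => iota t (M+1) (fun i => (z i j : Γ)))) (fun z => hc'b _)
    rw [hx, hx']
    simp only [av_sub] at c3 ⊢
    have d1 := abs_av_le c1
    have d2 := abs_av_le c2
    simp only [av_sub] at d1 d2
    rw [abs_le] at d1 d2 c3 ⊢
    constructor <;> linarith [d1.1, d1.2, d2.1, d2.2, c3.1, c3.2]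

end Lamp

section Translate
variable {Γ : Type*} [Group Γ]

lemma link (φ : List Γ → ℝ) (hinv : ∀ g L, φ (L.map (g * ·)) = φ L) (n : ℕ) (g : Fin (n+1) → Γ) :
    bddDelta (fun _ v => v) n (fun g : Fin n → Γ => φ (List.ofFn (Fin.partialProd g))) g
      = D φ (List.ofFn (Fin.partialProd g)) := by
  rw [D_ofFn, Fin.sum_univ_succ]
  simp only [← Fin.partialProd_contractNth]
  rw [Fin.sum_univ_castSucc, ← add_assoc]
  unfold bddDelta
  congr 1
  · congr 1
    · have : Fin.partialProd g ∘ (0 : Fin (n+2)).succAbove =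
          (g 0 * ·) ∘ (Fin.partialProd (Fin.tail g)) := by
        funext j
        simp [Fin.partialProd_succ']
      rw [this, ← List.map_ofFn, hinv]
      simp
      rfl
  · simp only [smul_eq_mul, Fin.val_succ, Fin.val_last]
    congr 3
    congr 1
    funext j
    rw [Fin.contractNth_apply_of_lt _ _ _ _ (by simp)]

/-- Homogenisation of a cochain. -/
noncomputable def hom (n : ℕ) (f : (Fin (n+1) → Γ) → ℝ) (L : List Γ) : ℝ :=
  if L.length = n + 2 then f (fun i => (L.getD i 1)⁻¹ * L.getD (i + 1) 1) else 0

lemma hom_ofFn (n : ℕ) (f : (Fin (n+1) → Γ) → ℝ) (x : Fin (n+2) → Γ) :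
    hom n f (List.ofFn x) = f (fun i => (x i.castSucc)⁻¹ * x i.succ) := by
  unfold hom
  rw [if_pos (by simp)]
  congr 1
  funext i
  have h1 : (i : ℕ) < n + 2 := by omega
  have h2 : (i : ℕ) + 1 < n + 2 := by omega
  simp only [List.getD_eq_getElem?_getD, List.getElem?_ofFn, h1, h2, dif_pos, Option.getD_some]
  rfl

lemma ofFn_of_length {l : ℕ} (L : List Γ) (hL : L.length = l) :
    ∃ x : Fin l → Γ, L = List.ofFn x := by
  subst hL
  exact ⟨L.get, (List.ofFn_get L).symm⟩

lemma hom_inv (n : ℕ) (f : (Fin (n+1) → Γ) → ℝ) (g : Γ) (L : List Γ) :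
    hom n f (L.map (g * ·)) = hom n f L := by
  by_cases hL : L.length = n + 2
  · obtain ⟨x, rfl⟩ := ofFn_of_length L hL
    rw [List.map_ofFn, hom_ofFn, hom_ofFn]
    simp [mul_assoc]
  · simp [hom, hL]

lemma hom_partialProd (n : ℕ) (f : (Fin (n+1) → Γ) → ℝ) (g : Fin (n+1) → Γ) :
    hom n f (List.ofFn (Fin.partialProd g)) = f g := by
  rw [hom_ofFn]
  simp only [Fin.partialProd_right_inv]

lemma D_hom (n : ℕ) (f : (Fin (n+1) → Γ) → ℝ) (hf : bddDelta (fun _ v => v) (n+1) f = 0)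
    (L : List Γ) : D (hom n f) L = 0 := by
  by_cases hL : L.length = n + 3
  · obtain ⟨x, rfl⟩ := ofFn_of_length L hL
    have hx : List.ofFn x = (List.ofFn (Fin.partialProd
        (fun i : Fin (n+2) => (x i.castSucc)⁻¹ * x i.succ))).map (x 0 * ·) := by
      rw [List.map_ofFn]
      congr 1
      exact (Fin.partialProd_left_inv x).symm
    rw [hx, ← D_map]
    simp only [hom_inv]
    have := link (hom n f) (hom_inv n f) (n+1) (fun i : Fin (n+2) => (x i.castSucc)⁻¹ * x i.succ)
    simp only [hom_partialProd] at this
    rw [hf] at this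
    exact this.symm
  · rcases L with _ | ⟨a, L⟩
    · simp [D]
    · obtain ⟨x, hx⟩ := ofFn_of_length (a :: L) (List.length_cons)
      rw [hx, D_ofFn]
      refine Finset.sum_eq_zero fun k _ => ?_
      simp only [List.length_cons] at hL
      rw [hom, if_neg (by simp; omega), mul_zero]

theorem reduce (key : ∀ (c : List Γ → ℝ) (C : ℝ), (∀ L, |c L| ≤ C) → (∀ L, D c L = 0) →
    (∀ g L, c (L.map (g * ·)) = c L) → ∃ b : List Γ → ℝ,
      (∀ L, |b L| ≤ C + 2 * (L.length * C)) ∧ (∀ L, D b L = c L) ∧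
        ∀ g L, b (L.map (g * ·)) = b L) : BoundedlyAcyclic Γ := by
  intro n f ⟨C, hC⟩ hf
  have hC0 : 0 ≤ C := (norm_nonneg _).trans (hC (fun _ => 1))
  obtain ⟨b, hb1, hb2, hb3⟩ := key (hom n f) C (by
    intro L
    unfold hom
    split_ifs
    · exact hC _
    · simpa using hC0) (D_hom n f hf) (hom_inv n f)
  refine ⟨fun g => b (List.ofFn (Fin.partialProd g)), ⟨C + 2 * ((n + 1 : ℕ) * C), fun g => ?_⟩, ?_⟩
  · have := hb1 (List.ofFn (Fin.partialProd g))
    rw [List.length_ofFn] at this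
    exact this
  · funext g
    rw [link b hb3, hb2, hom_partialProd]

end Translate

section Thompson


lemma dy_half {r : ℝ} (h : IsDyadic r) : IsDyadic (r / 2) := by
  obtain ⟨a, b, rfl⟩ := h
  exact ⟨a, b + 1, by rw [pow_succ, div_div]⟩

lemma dy_three {r : ℝ} (h : IsDyadic r) : IsDyadic (3 * r) := by
  obtain ⟨a, b, rfl⟩ := h
  exact ⟨3 * a, b, by push_cast; ring⟩

/-- The element of Thompson's group supported on `[0,e]`. -/
noncomputable def elt (e : ℝ) (h0 : 0 < e) (h1 : e ≤ 1) : Equiv.Perm ↥(Set.Icc (0 : ℝ) 1) where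
  toFun x := ⟨if (x : ℝ) ≤ e / 2 then x / 2 else if (x : ℝ) ≤ 3 * e / 4 then x - e / 4 else
    if (x : ℝ) ≤ e then 2 * x - e else x, by
      obtain ⟨x, hx0, hx1⟩ := x
      simp only
      split_ifs <;> constructor <;> linarith⟩
  invFun x := ⟨if (x : ℝ) ≤ e / 4 then 2 * x else if (x : ℝ) ≤ e / 2 then x + e / 4 else
    if (x : ℝ) ≤ e then (x + e) / 2 else x, by
      obtain ⟨x, hx0, hx1⟩ := x
      simp only
      split_ifs <;> constructor <;> linarith⟩
  left_inv := by
    rintro ⟨x, hx0, hx1⟩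
    apply Subtype.ext
    simp only
    split_ifs <;> linarith
  right_inv := by
    rintro ⟨x, hx0, hx1⟩
    apply Subtype.ext
    simp only
    split_ifs <;> linarith

lemma elt_apply (e : ℝ) (h0 : 0 < e) (h1 : e ≤ 1) (x : ↥(Set.Icc (0 : ℝ) 1)) : (elt e h0 h1 x : ℝ) =
    if (x : ℝ) ≤ e / 2 then (x : ℝ) / 2 else if (x : ℝ) ≤ 3 * e / 4 then x - e / 4 else
    if (x : ℝ) ≤ e then 2 * x - e else x := rfl

lemma elt_le (e : ℝ) (h0 : 0 < e) (h1 : e ≤ 1) (x : ↥(Set.Icc (0 : ℝ) 1)) : (elt e h0 h1 x : ℝ) ≤ x := by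
  rw [elt_apply]
  have := x.2.1
  split_ifs <;> linarith

lemma elt_thompson (e : ℝ) (h0 : 0 < e) (h1 : e ≤ 1) (hd : IsDyadic e) : IsThompson (elt e h0 h1) := by
  constructor
  · intro x y hxy
    have hxy' : (x : ℝ) < y := hxy
    simp only [elt_apply]
    split_ifs <;> linarith
  · refine ⟨{e / 2, 3 * e / 4, e}, ?_, ?_⟩
    · intro q hq
      simp only [Finset.mem_insert, Finset.mem_singleton] at hq
      rcases hq with rfl | rfl | rfl
      · exact (dy_half hd)
      · have := (dy_half (dy_half (dy_three hd)))
        rwa [div_div, show (2:ℝ) * 2 = 4 by norm_num] at this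
      · exact hd
    · intro x y hxy hs
      have a1 := hs (e / 2) (by simp)
      have a2 := hs (3 * e / 4) (by simp)
      have a3 := hs e (by simp)
      simp only [Set.mem_Ioo, not_and, not_lt] at a1 a2 a3
      simp only [elt_apply]
      rcases lt_or_ge (x : ℝ) (e / 2) with hx | hx
      · have := a1 hx
        refine ⟨-1, fun t ht => ?_⟩
        obtain ⟨ht0, ht1⟩ := ht
        rw [zpow_neg_one]
        split_ifs <;> linarith
      rcases lt_or_ge (x : ℝ) (3 * e / 4) with hx | hx
      · have := a2 hx
        refine ⟨0, fun t ht => ?_⟩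
        obtain ⟨ht0, ht1⟩ := ht
        rw [zpow_zero]
        split_ifs <;> linarith
      rcases lt_or_ge (x : ℝ) e with hx | hx
      · have := a3 hx
        refine ⟨1, fun t ht => ?_⟩
        obtain ⟨ht0, ht1⟩ := ht
        rw [zpow_one]
        split_ifs <;> linarith
      · refine ⟨0, fun t ht => ?_⟩
        obtain ⟨ht0, ht1⟩ := ht
        rw [zpow_zero]
        split_ifs <;> linarith

/-- `g` has slope `2^m` near the endpoint at which `d` vanishes. -/
def germ (d : ↥(Set.Icc (0 : ℝ) 1) → ℝ) (g : Equiv.Perm ↥(Set.Icc (0 : ℝ) 1)) (m : ℤ) : Prop :=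
  ∃ δ : ℝ, 0 < δ ∧ ∀ x, d x ≤ δ → d (g x) = (2 : ℝ) ^ m * d x

lemma germ_one (d : ↥(Set.Icc (0 : ℝ) 1) → ℝ) : germ d 1 0 := ⟨1, one_pos, fun x _ => by simp⟩

lemma germ_mul {d : ↥(Set.Icc (0 : ℝ) 1) → ℝ} {g k : Equiv.Perm ↥(Set.Icc (0 : ℝ) 1)} {m m' : ℤ} (hg : germ d g m) (hk : germ d k m') :
    germ d (g * k) (m + m') := by
  obtain ⟨δ, hδ, hg⟩ := hg
  obtain ⟨δ', hδ', hk⟩ := hk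
  have h2 : (0:ℝ) < (2 : ℝ) ^ m' := by positivity
  refine ⟨min δ' (δ / (2 : ℝ) ^ m'), by positivity, fun x hx => ?_⟩
  have e1 := hk x (hx.trans (min_le_left _ _))
  have e2 := hx.trans (min_le_right _ _)
  rw [le_div_iff₀ h2] at e2
  rw [Equiv.Perm.mul_apply, hg _ (by rw [e1]; linarith), e1, zpow_add₀ (by norm_num)]
  ring

lemma germ_unique {d : ↥(Set.Icc (0 : ℝ) 1) → ℝ} (hd : ∀ δ > 0, ∃ x, 0 < d x ∧ d x ≤ δ) {g : Equiv.Perm ↥(Set.Icc (0 : ℝ) 1)} {m m' : ℤ}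
    (h1 : germ d g m) (h2 : germ d g m') : m = m' := by
  obtain ⟨δ, hδ, h1⟩ := h1
  obtain ⟨δ', hδ', h2⟩ := h2
  obtain ⟨x, hx0, hx⟩ := hd (min δ δ') (by positivity)
  have e1 := h1 x (hx.trans (min_le_left _ _))
  have e2 := h2 x (hx.trans (min_le_right _ _))
  rw [e1] at e2
  have e3 := mul_right_cancel₀ hx0.ne' e2
  exact zpow_right_injective₀ (by norm_num) (by norm_num) e3

lemma germ_pow {d : ↥(Set.Icc (0 : ℝ) 1) → ℝ} {g : Equiv.Perm ↥(Set.Icc (0 : ℝ) 1)} {m : ℤ} (hg : germ d g m) (k : ℕ) :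
    germ d (g ^ k) (k * m) := by
  induction k with
  | zero => simpa using germ_one d
  | succ k ih =>
    rw [pow_succ]
    have := germ_mul ih hg
    convert this using 1
    push_cast; ring

section grp
variable (H : Subgroup (Equiv.Perm ↥(Set.Icc (0 : ℝ) 1)))

lemma germ_inv {d : ↥(Set.Icc (0 : ℝ) 1) → ℝ} (hd : ∀ δ > 0, ∃ x, 0 < d x ∧ d x ≤ δ)
    (hex : ∀ g ∈ H, ∃ m, germ d g m) {g : Equiv.Perm ↥(Set.Icc (0 : ℝ) 1)} (hgH : g ∈ H) {m : ℤ} (hg : germ d g m) :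
    germ d g⁻¹ (-m) := by
  obtain ⟨m', hm'⟩ := hex _ (H.inv_mem hgH)
  have h1 := germ_mul hg hm'
  rw [mul_inv_cancel] at h1
  have := germ_unique hd h1 (germ_one d)
  rwa [show -m = m' by omega]

lemma germ_conj {d : ↥(Set.Icc (0 : ℝ) 1) → ℝ} (hd : ∀ δ > 0, ∃ x, 0 < d x ∧ d x ≤ δ)
    (hex : ∀ g ∈ H, ∃ m, germ d g m) {g f : Equiv.Perm ↥(Set.Icc (0 : ℝ) 1)} (hgH : g ∈ H) (hf : germ d f 0) :
    germ d (g * f * g⁻¹) 0 := by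
  obtain ⟨m, hm⟩ := hex _ hgH
  have := germ_mul (germ_mul hm hf) (germ_inv H hd hex hgH hm)
  convert this using 1
  ring

lemma germ_red {d : ↥(Set.Icc (0 : ℝ) 1) → ℝ} (hd : ∀ δ > 0, ∃ x, 0 < d x ∧ d x ≤ δ)
    (hex : ∀ g ∈ H, ∃ m, germ d g m) {v : Equiv.Perm ↥(Set.Icc (0 : ℝ) 1)} (hv : germ d v (-1))
    {f : Equiv.Perm ↥(Set.Icc (0 : ℝ) 1)} (hfH : f ∈ H) :
    ∃ k : ℕ, germ d (v ^ k * f) 0 ∨ germ d (v ^ k * f⁻¹) 0 := by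
  obtain ⟨m, hm⟩ := hex _ hfH
  refine ⟨m.natAbs, ?_⟩
  have h1 := germ_pow hv m.natAbs
  rcases le_total 0 m with h0 | h0
  · left
    convert germ_mul h1 hm using 1
    omega
  · right
    convert germ_mul h1 (germ_inv H hd hex hfH hm) using 1
    omega

end grp

/-- Distance to `0`. -/
def d0 : ↥(Set.Icc (0 : ℝ) 1) → ℝ := fun x => x
/-- Distance to `1`. -/
def d1 : ↥(Set.Icc (0 : ℝ) 1) → ℝ := fun x => 1 - x

lemma hd0 : ∀ δ > 0, ∃ x, 0 < d0 x ∧ d0 x ≤ δ := fun δ hδ =>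
  ⟨⟨min δ 1, by positivity, min_le_right _ _⟩, by simp only [d0]; positivity, by simp [d0]⟩

lemma hd1 : ∀ δ > 0, ∃ x, 0 < d1 x ∧ d1 x ≤ δ := fun δ hδ =>
  ⟨⟨1 - min δ 1, by simp, by simp; positivity⟩, by simp only [d1]; simp [hδ], by simp [d1]⟩

lemma thompson_zero {g : Equiv.Perm ↥(Set.Icc (0 : ℝ) 1)} (hg : IsThompson g) : (g 0 : ℝ) = 0 := by
  obtain ⟨y, hy⟩ := g.surjective 0
  have h1 : g 0 ≤ g y := by
    rcases eq_or_lt_of_le (show (0 : ↥(Set.Icc (0 : ℝ) 1)) ≤ y from y.2.1) with h | h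
    · rw [h]
    · exact (hg.1 h).le
  rw [hy] at h1
  exact le_antisymm h1 (g 0).2.1

lemma thompson_one {g : Equiv.Perm ↥(Set.Icc (0 : ℝ) 1)} (hg : IsThompson g) : (g 1 : ℝ) = 1 := by
  obtain ⟨y, hy⟩ := g.surjective 1
  have h1 : g y ≤ g 1 := by
    rcases eq_or_lt_of_le (show y ≤ (1 : ↥(Set.Icc (0 : ℝ) 1)) from y.2.2) with h | h
    · rw [h]
    · exact (hg.1 h).le
  rw [hy] at h1
  exact le_antisymm (g 1).2.2 h1

lemma exists_gap (s : Finset ℝ) : ∃ δ : ℝ, 0 < δ ∧ δ ≤ 1 ∧ ∀ q ∈ s, q ∉ Set.Ioo (0:ℝ) δ := by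
  classical
  induction s using Finset.induction_on with
  | empty => exact ⟨1, one_pos, le_rfl, by simp⟩
  | insert a s _ ih =>
    obtain ⟨δ, h0, h1, h⟩ := ih
    rcases le_or_gt a 0 with ha | ha
    · refine ⟨δ, h0, h1, fun q hq => ?_⟩
      rcases Finset.mem_insert.1 hq with rfl | hq
      · exact fun h' => absurd h'.1 (not_lt.2 ha)
      · exact h q hq
    · refine ⟨min δ a, by positivity, (min_le_left _ _).trans h1, fun q hq => ?_⟩
      rcases Finset.mem_insert.1 hq with rfl | hq
      · exact fun h' => absurd h'.2 (not_lt.2 (min_le_right _ _))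
      · exact fun h' => h q hq ⟨h'.1, h'.2.trans_le (min_le_left _ _)⟩

lemma ex_germ0 {g : Equiv.Perm ↥(Set.Icc (0 : ℝ) 1)} (hg : IsThompson g) : ∃ m, germ d0 g m := by
  obtain ⟨s, -, hs⟩ := hg.2
  obtain ⟨δ, h0, h1, h⟩ := exists_gap s
  obtain ⟨m, hm⟩ := hs 0 ⟨δ, h0.le, h1⟩ h0.le h
  refine ⟨m, δ, h0, fun x hx => ?_⟩
  have := hm x ⟨x.2.1, hx⟩
  rw [thompson_zero hg] at this
  simpa [d0] using this

lemma ex_germ1 {g : Equiv.Perm ↥(Set.Icc (0 : ℝ) 1)} (hg : IsThompson g) : ∃ m, germ d1 g m := by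
  classical
  obtain ⟨s, -, hs⟩ := hg.2
  obtain ⟨δ, h0, h1, h⟩ := exists_gap (s.image (fun q => 1 - q))
  obtain ⟨m, hm⟩ := hs ⟨1 - δ, by linarith, by linarith⟩ 1 (by simp; exact h0.le) (by
    intro q hq hq'
    refine h (1 - q) (Finset.mem_image_of_mem _ hq) ⟨?_, ?_⟩
    · have := hq'.2; simp at this; linarith
    · have := hq'.1; simp at this; linarith)
  refine ⟨m, δ, h0, fun x hx => ?_⟩
  simp only [d1] at hx ⊢
  have e1 := hm x ⟨by simp only; linarith, x.2.2⟩
  have e2 := hm 1 ⟨by simp; exact h0.le, le_rfl⟩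
  rw [thompson_one hg] at e2
  simp only [Set.Icc.coe_one] at e2
  rw [e1]
  linarith

lemma elt_germ0 (e : ℝ) (h0 : 0 < e) (h1 : e ≤ 1) : germ d0 (elt e h0 h1) (-1) := by
  refine ⟨e / 2, by positivity, fun x hx => ?_⟩
  simp only [d0] at hx ⊢
  rw [elt_apply, if_pos hx, zpow_neg_one]
  ring

lemma elt_germ1_one : germ d1 (elt 1 one_pos le_rfl) 1 := by
  refine ⟨1 / 8, by positivity, fun x hx => ?_⟩
  simp only [d1] at hx ⊢
  have := x.2.2
  rw [elt_apply, if_neg (by linarith), if_neg (by linarith), if_pos this, zpow_one]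
  ring

lemma elt_germ1_half : germ d1 (elt (1/2) (by norm_num) (by norm_num)) 0 := by
  refine ⟨1 / 8, by positivity, fun x hx => ?_⟩
  simp only [d1] at hx ⊢
  have := x.2.2
  rw [elt_apply, if_neg (by linarith), if_neg (by linarith), if_neg (by linarith), zpow_zero]
  ring

lemma elt_pow_half (m : ℕ) (x : ↥(Set.Icc (0 : ℝ) 1)) (hx : (x : ℝ) ≤ 1 / 2) :
    (((elt 1 one_pos le_rfl) ^ m) x : ℝ) = x / 2 ^ m := by
  induction m with
  | zero => simp
  | succ m ih =>
    rw [pow_succ', Equiv.Perm.mul_apply, elt_apply, ih, if_pos, pow_succ, div_div]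
    have : (x : ℝ) / 2 ^ m ≤ x := div_le_self x.2.1 (one_le_pow₀ (by norm_num))
    linarith

lemma elt_pow_top (m : ℕ) (x : ↥(Set.Icc (0 : ℝ) 1)) (hx : (x : ℝ) = 1 - 1 / 2 ^ (m + 1)) :
    (((elt 1 one_pos le_rfl) ^ m) x : ℝ) = 1 / 2 := by
  induction m generalizing x with
  | zero => rw [pow_zero, Equiv.Perm.one_apply, hx]; norm_num
  | succ m ih =>
    rw [pow_succ, Equiv.Perm.mul_apply]
    apply ih
    rw [elt_apply]
    have e : (1:ℝ) / 2 ^ (m + 1 + 1) = 1 / 2 ^ (m + 1) / 2 := by rw [pow_succ, div_div]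
    rw [e] at hx
    have h2 : (1:ℝ) / 2 ^ (m + 1) ≤ 1 / 2 := by
      apply one_div_le_one_div_of_le (by norm_num)
      exact le_self_pow₀ (by norm_num) (by omega)
    have h3 : (0:ℝ) < 1 / 2 ^ (m + 1) := by positivity
    split_ifs <;> linarith

lemma elt_pow_top' (m : ℕ) (x : ↥(Set.Icc (0 : ℝ) 1)) (hx : (x : ℝ) = 1 - 1 / 2 ^ (m + 1)) :
    (((elt 1 one_pos le_rfl) ^ (2 * m)) x : ℝ) = 1 / 2 ^ (m + 1) := by
  rw [two_mul, pow_add, Equiv.Perm.mul_apply, elt_pow_half, elt_pow_top m x hx, pow_succ, div_div,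
    mul_comm]
  rw [elt_pow_top m x hx]

lemma elt_pow_le (k : ℕ) (x : ↥(Set.Icc (0 : ℝ) 1)) : (((elt 1 one_pos le_rfl) ^ k) x : ℝ) ≤ x := by
  induction k with
  | zero => simp
  | succ k ih =>
    rw [pow_succ', Equiv.Perm.mul_apply]
    exact (elt_le _ _ _ _).trans ih

/-- The elements supported in `[2^{-(m+1)}, 1 - 2^{-(m+1)}]`. -/
def Gsub (H : Subgroup (Equiv.Perm ↥(Set.Icc (0 : ℝ) 1))) (m : ℕ) : Subgroup H where
  carrier := {g | ∀ x : ↥(Set.Icc (0 : ℝ) 1), ((x : ℝ) ≤ 1 / 2 ^ (m+1) ∨ 1 - 1 / 2 ^ (m+1) ≤ (x : ℝ)) →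
    (g : Equiv.Perm ↥(Set.Icc (0 : ℝ) 1)) x = x}
  mul_mem' := by
    intro a b ha hb x hx
    rw [Subgroup.coe_mul, Equiv.Perm.mul_apply, hb x hx, ha x hx]
  one_mem' := fun x _ => rfl
  inv_mem' := by
    intro a ha x hx
    rw [Subgroup.coe_inv, Equiv.Perm.inv_eq_iff_eq]
    exact (ha x hx).symm

lemma mem_Gsub_eventually (H : Subgroup (Equiv.Perm ↥(Set.Icc (0 : ℝ) 1))) (g : H) (h0 : germ d0 g 0) (h1 : germ d1 g 0) :
    ∀ᶠ m : ℕ in Filter.atTop, g ∈ Gsub H m := by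
  obtain ⟨δ, hδ, h0⟩ := h0
  obtain ⟨δ', hδ', h1⟩ := h1
  have hlim : Filter.Tendsto (fun m : ℕ => (1:ℝ) / 2 ^ (m+1)) Filter.atTop (nhds 0) := by
    have := (tendsto_pow_atTop_nhds_zero_of_lt_one (r := (1/2 : ℝ)) (by norm_num) (by norm_num)).comp
      (Filter.tendsto_add_atTop_nat 1)
    refine this.congr fun m => ?_
    simp
  filter_upwards [hlim.eventually (gt_mem_nhds hδ), hlim.eventually (gt_mem_nhds hδ')] with m hm hm'
  intro x hx
  apply Subtype.ext
  rcases hx with hx | hx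
  · have := h0 x (by simp only [d0]; linarith)
    simpa [d0] using this
  · have := h1 x (by simp only [d1]; linarith)
    simp only [d1, zpow_zero] at this
    linarith

lemma Gsub_comm (H : Subgroup (Equiv.Perm ↥(Set.Icc (0 : ℝ) 1))) (hH : ∀ f, f ∈ H ↔ IsThompson f) (m : ℕ) (T : H)
    (hT : (T : Equiv.Perm ↥(Set.Icc (0 : ℝ) 1)) = elt 1 one_pos le_rfl) :
    ∀ g ∈ Gsub H m, ∀ k ∈ Gsub H m, ∀ i : ℕ,
      Commute g ((T ^ (2 * m)) ^ (i+1) * k * ((T ^ (2 * m)) ^ (i+1))⁻¹) := by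
  intro g hg k hk i
  set r : H := (T ^ (2 * m)) ^ (i+1) with hr
  have hmono : StrictMono (fun x : ↥(Set.Icc (0 : ℝ) 1) => ((r : Equiv.Perm ↥(Set.Icc (0 : ℝ) 1)) x : ℝ)) := ((hH _).1 r.2).1
  have hdisj : Equiv.Perm.Disjoint (g : Equiv.Perm ↥(Set.Icc (0 : ℝ) 1)) ((r * k * r⁻¹ : H) : Equiv.Perm ↥(Set.Icc (0 : ℝ) 1)) := by
    intro x
    by_cases hx : (x : ℝ) ≤ 1 / 2 ^ (m+1)
    · exact Or.inl (hg x (Or.inl hx))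
    · right
      push Not at hx
      have hp0 : (0:ℝ) < 1 / 2 ^ (m+1) := by positivity
      have hp1 : (1:ℝ) / 2 ^ (m+1) ≤ 1 := by
        rw [div_le_one (by positivity)]; exact one_le_pow₀ (by norm_num)
      let β : ↥(Set.Icc (0 : ℝ) 1) := ⟨1 - 1 / 2 ^ (m+1), by linarith, by linarith⟩
      have hβ : ((r : Equiv.Perm ↥(Set.Icc (0 : ℝ) 1)) β : ℝ) ≤ 1 / 2 ^ (m+1) := by
        have e : (r : Equiv.Perm ↥(Set.Icc (0 : ℝ) 1)) = (elt 1 one_pos le_rfl) ^ (2 * m * i) *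
            (elt 1 one_pos le_rfl) ^ (2 * m) := by
          rw [hr, ← pow_add, ← hT, ← pow_mul, mul_add, mul_one]
          simp
        rw [e, Equiv.Perm.mul_apply]
        exact (elt_pow_le _ _).trans (elt_pow_top' m β rfl).le
      have hy : β ≤ (r : Equiv.Perm ↥(Set.Icc (0 : ℝ) 1))⁻¹ x := by
        by_contra hlt
        push Not at hlt
        have := hmono hlt
        have e : (r : Equiv.Perm ↥(Set.Icc (0 : ℝ) 1)) ((r : Equiv.Perm ↥(Set.Icc (0 : ℝ) 1))⁻¹ x) = x :=
          Equiv.apply_symm_apply _ _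
        simp only [e] at this
        linarith
      have hk' := hk ((r : Equiv.Perm ↥(Set.Icc (0 : ℝ) 1))⁻¹ x) (Or.inr hy)
      simp only [Subgroup.coe_mul, Subgroup.coe_inv, Equiv.Perm.mul_apply]
      rw [hk']
      simp
  have := hdisj.commute
  exact Subtype.ext this.eq

lemma inv_mul_mem {Γ : Type*} [Group Γ] {b : List Γ → ℝ} {v f : Γ}
    (hv : ∀ L, b (L.map (v * ·)) = b L) (k : ℕ) (h : ∀ L, b (L.map (v ^ k * f * ·)) = b L) :
    ∀ L, b (L.map (f * ·)) = b L := by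
  induction k with
  | zero => simpa using h
  | succ k ih =>
    apply ih
    intro L
    rw [← h L, ← hv]
    simp [List.map_map, Function.comp_def, pow_succ', mul_assoc]

lemma inv_inv_mem {Γ : Type*} [Group Γ] {b : List Γ → ℝ} {f : Γ}
    (h : ∀ L, b (L.map (f⁻¹ * ·)) = b L) :
    ∀ L, b (L.map (f * ·)) = b L := by
  intro L
  rw [← h]
  simp [List.map_map, Function.comp_def]

theorem main (H : Subgroup (Equiv.Perm ↥(Set.Icc (0 : ℝ) 1))) (hH : ∀ f, f ∈ H ↔ IsThompson f) :
    BoundedlyAcyclic H := by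
  apply reduce
  intro c C hc hD hinv
  have hB : ∀ (g : H) (L : List H), C + 2 * ((L.map (g * ·)).length * C) = C + 2 * (L.length * C) := by
    intro g L; simp
  have dy1 : IsDyadic 1 := ⟨1, 0, by simp⟩
  have dy2 : IsDyadic (1/2) := (dy_half dy1)
  let T : H := ⟨elt 1 one_pos le_rfl, (hH _).2 (elt_thompson _ _ _ dy1)⟩
  let U : H := ⟨elt (1/2) (by norm_num) (by norm_num), (hH _).2 (elt_thompson _ _ _ dy2)⟩
  have hex0 : ∀ g ∈ H, ∃ m, germ d0 g m := fun g hg => ex_germ0 ((hH g).1 hg)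
  have hex1 : ∀ g ∈ H, ∃ m, germ d1 g m := fun g hg => ex_germ1 ((hH g).1 hg)
  let Λ0 : Set H := {g | germ d0 g 0 ∧ germ d1 g 0}
  let Λ1 : Set H := {g | germ d1 g 0}
  obtain ⟨b0, hb1, hb2, hb3⟩ := limit_lemma c (fun L => C + 2 * (L.length * C)) Λ0 (by
    intro J ε hε
    classical
    have : ∀ᶠ m : ℕ in Filter.atTop, ∀ q ∈ J, (q.1 : H) ∈ Gsub H m := by
      rw [Filter.eventually_all_finset]
      intro q _
      exact mem_Gsub_eventually H q.1 q.1.2.1 q.1.2.2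
    obtain ⟨m, hm⟩ := this.exists
    obtain ⟨b, h1, h2, h3⟩ := lamplighter c C hc hD hinv (Gsub H m) (T ^ (2 * m))
      (Gsub_comm H hH m T rfl) (J.image fun q => ((q.1 : H), q.2)) (by
        intro q hq
        obtain ⟨q', hq', rfl⟩ := Finset.mem_image.1 hq
        exact hm q' hq') ε hε
    exact ⟨b, h1, h2, fun q hq => h3 _ (Finset.mem_image_of_mem (fun q => ((q.1 : H), q.2)) hq)⟩)
  obtain ⟨b1, hb1, hb2, hb3⟩ := extend_cyclic c (fun L => C + 2 * (L.length * C)) hinv hB Λ0 U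
    (fun f hf i => ⟨germ_conj H hd0 hex0 (U ^ i).2 hf.1, germ_conj H hd1 hex1 (U ^ i).2 hf.2⟩)
    b0 hb1 hb2 hb3
  have hb1inv : ∀ f ∈ Λ1, ∀ L, b1 (L.map (f * ·)) = b1 L := by
    intro f hf
    obtain ⟨k, hk⟩ := germ_red H hd0 hex0 (elt_germ0 (1/2) (by norm_num) (by norm_num)) f.2
    have hUk := germ_pow elt_germ1_half k
    rw [mul_zero] at hUk
    rcases hk with hk | hk
    · refine inv_mul_mem (hb3 U (Or.inl rfl)) k (hb3 (U ^ k * f) (Or.inr ⟨hk, ?_⟩))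
      have := germ_mul hUk hf
      rw [add_zero] at this
      exact this
    · refine inv_inv_mem (inv_mul_mem (hb3 U (Or.inl rfl)) k (hb3 (U ^ k * f⁻¹) (Or.inr ⟨hk, ?_⟩)))
      have := germ_mul hUk (germ_inv H hd1 hex1 f.2 hf)
      rw [neg_zero, add_zero] at this
      exact this
  obtain ⟨b2, hb1, hb2, hb3⟩ := extend_cyclic c (fun L => C + 2 * (L.length * C)) hinv hB Λ1 T⁻¹
    (fun f hf i => germ_conj H hd1 hex1 (T⁻¹ ^ i).2 hf)
    b1 hb1 hb2 hb1inv
  refine ⟨b2, hb1, hb2, fun f => ?_⟩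
  obtain ⟨k, hk⟩ := germ_red H hd1 hex1 (germ_inv H hd1 hex1 T.2 elt_germ1_one) f.2
  rcases hk with hk | hk
  · exact inv_mul_mem (hb3 T⁻¹ (Or.inl rfl)) k (hb3 (T⁻¹ ^ k * f) (Or.inr hk))
  · exact inv_inv_mem (inv_mul_mem (hb3 T⁻¹ (Or.inl rfl)) k (hb3 (T⁻¹ ^ k * f⁻¹) (Or.inr hk)))

end Thompson

end TF

/-- Thompson's group `F` (realised as the subgroup of the permutations
of `[0,1]` consisting exactly of the increasing piecewise-affine bijections with dyadic
breakpoints and slopes powers of `2`) is boundedly acyclic. -/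
theorem thompsonF_boundedlyAcyclic
    (H : Subgroup (Equiv.Perm ↥(Set.Icc (0 : ℝ) 1)))
    (hH : ∀ f, f ∈ H ↔ IsThompson f) :
    BoundedlyAcyclic H := by
  exact TF.main H hH
end

section
/- Let G be any group. Suppose that every countable subset of G is contained in some boundedly acyclic subgroup of G. Then G is boundedly acyclic. -/
open scoped BigOperators

/-- The coboundary commutes with restriction to a subgroup. -/
theorem bddDelta_restrict {G : Type*} [Group G] (H : Subgroup G) (n : ℕ)
    (f : (Fin n → G) → ℝ) (g : Fin (n + 1) → H) :
    bddDelta (G := H) (E := ℝ) (fun _ v => v) n (fun x => f (fun j => (x j : G))) g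
      = bddDelta (G := G) (E := ℝ) (fun _ v => v) n f (fun j => (g j : G)) := by
  unfold bddDelta
  simp only [apply_ite (Subtype.val : H → G), Subgroup.coe_mul]

/-- The coboundary is pointwise continuous in the cochain. -/
theorem continuous_bddDelta {G : Type*} [Group G] (n : ℕ) (g : Fin (n + 1) → G) :
    Continuous (fun f : (Fin n → G) → ℝ =>
      bddDelta (G := G) (E := ℝ) (fun _ v => v) n f g) := by
  unfold bddDelta
  fun_prop

/-- If every countable subset of `G` is contained in some boundedly
acyclic subgroup of `G`, then `G` is boundedly acyclic. -/
theorem boundedlyAcyclic_from_countable_subgroups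
    {G : Type*} [Group G]
    (h : ∀ C : Set G, C.Countable → ∃ G₁ : Subgroup G, C ⊆ G₁ ∧ BoundedlyAcyclic G₁) :
    BoundedlyAcyclic G := by
  classical
  intro n f hf hδ
  -- a uniform bound for primitives on finite sets of tuples
  have key : ∃ N : ℕ, ∀ T : Finset (Fin (n + 1) → G), ∃ b : (Fin n → G) → ℝ,
      (∀ x, ‖b x‖ ≤ N) ∧
      ∀ g ∈ T, bddDelta (G := G) (E := ℝ) (fun _ v => v) n b g = f g := by
    by_contra hcon
    push Not at hcon
    choose T hT using hcon
    obtain ⟨H, hCH, hH⟩ := h (⋃ N : ℕ, ⋃ g ∈ T N, Set.range g)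
      (Set.countable_iUnion fun N => (T N).countable_toSet.biUnion fun g _ =>
        Set.countable_range g)
    obtain ⟨C, hC⟩ := hf
    obtain ⟨b, ⟨B, hB⟩, hb⟩ := hH n (fun x => f (fun j => (x j : G)))
      ⟨C, fun g => hC _⟩ (by
        funext g
        rw [bddDelta_restrict, hδ]
        rfl)
    obtain ⟨N, hN⟩ := exists_nat_ge B
    let b' : (Fin n → G) → ℝ := fun x =>
      if hx : ∀ j, x j ∈ H then b (fun j => ⟨x j, hx j⟩) else 0
    have hb' : (fun x : Fin n → H => b' (fun j => (x j : G))) = b := by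
      funext x
      simp [b']
    obtain ⟨g, hg, hne⟩ := hT N b' (by
      intro x
      by_cases hx : ∀ j, x j ∈ H
      · simp only [b', dif_pos hx]
        exact (hB _).trans hN
      · simp only [b', dif_neg hx, norm_zero]
        exact Nat.cast_nonneg N)
    apply hne
    have hgH : ∀ j, g j ∈ H := fun j => hCH (by
      simp only [Set.mem_iUnion]
      exact ⟨N, g, hg, j, rfl⟩)
    have h1 := bddDelta_restrict H n b' (fun j => ⟨g j, hgH j⟩)
    rw [hb', hb] at h1
    exact h1.symm
  obtain ⟨N, hN⟩ := key
  have hK : IsCompact (Set.pi Set.univ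
      (fun _ : Fin n → G => Metric.closedBall (0 : ℝ) (N : ℝ))) :=
    isCompact_univ_pi fun _ => isCompact_closedBall _ _
  obtain ⟨b, hbK, hb⟩ := hK.inter_iInter_nonempty
    (fun g : Fin (n + 1) → G =>
      {b : (Fin n → G) → ℝ | bddDelta (G := G) (E := ℝ) (fun _ v => v) n b g = f g})
    (fun g => isClosed_eq (continuous_bddDelta n g) continuous_const)
    (fun T => by
      obtain ⟨b, hb1, hb2⟩ := hN T
      refine ⟨b, fun x _ => by simpa using hb1 x, ?_⟩
      simp only [Set.mem_iInter]
      exact fun g hg => hb2 g hg)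
  refine ⟨b, ⟨N, fun x => by simpa using hbK x (Set.mem_univ x)⟩, ?_⟩
  funext g
  exact Set.mem_iInter.1 hb g
end

section
/- Let X be a measurable space equipped with a probability measure μ, and let ν be the product probability measure on the space ℤ → X of all functions from ℤ to X. Then the shift map T : (ℤ → X) → (ℤ → X), defined by (T y)(n) = y(n + 1), is measure-preserving and ergodic with respect to ν. -/
open MeasureTheory

lemma bern_iterate {X : Type*} (n : ℕ) (y : ℤ → X) (i : ℤ) :
    ((fun (y : ℤ → X) (n : ℤ) => y (n + 1))^[n]) y i = y (i + n) := by
  induction n generalizing y i with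
  | zero => simp
  | succ k ih =>
    rw [Function.iterate_succ_apply, ih]
    push_cast
    congr 1
    ring

lemma bern_indep {X : Type*} [MeasurableSpace X] (μ : Measure X) [IsProbabilityMeasure μ]
    (s : Finset ℤ) (S : Set (s → X)) (hS : MeasurableSet S) :
    ∃ n : ℕ, Measure.infinitePi (fun _ : ℤ => μ) (cylinder s S ∩
      ((fun (y : ℤ → X) (n : ℤ) => y (n + 1))^[n]) ⁻¹' cylinder s S) =
      Measure.infinitePi (fun _ : ℤ => μ) (cylinder s S) *
      Measure.infinitePi (fun _ : ℤ => μ)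
        (((fun (y : ℤ → X) (n : ℤ) => y (n + 1))^[n]) ⁻¹' cylinder s S) := by
  classical
  let M : ℕ := ∑ i ∈ s, i.natAbs
  have hM : ∀ i ∈ s, i.natAbs ≤ M := fun i hi =>
    Finset.single_le_sum (f := fun i : ℤ => i.natAbs) (fun _ _ => Nat.zero_le _) hi
  let n : ℕ := 2 * M + 1
  refine ⟨n, ?_⟩
  let U : Finset ℤ := s.image (fun i => i + (n : ℤ))
  have hU : ∀ i : s, (i : ℤ) + n ∈ U := fun i => Finset.mem_image_of_mem _ i.2
  have hdis : Disjoint s U := by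
    rw [Finset.disjoint_left]
    intro i hi hi'
    obtain ⟨j, hj, hji⟩ := Finset.mem_image.1 hi'
    have h1 := hM i hi
    have h2 := hM j hj
    simp only [n] at hji
    omega
  have hind : ProbabilityTheory.iIndepFun (fun (i : ℤ) (ω : ℤ → X) => ω i)
      (Measure.infinitePi (fun _ : ℤ => μ)) :=
    ProbabilityTheory.iIndepFun_infinitePi (P := fun _ : ℤ => μ) (X := fun _ x => x)
      (fun _ => measurable_id)
  have h := hind.indepFun_finset s U hdis (fun i => measurable_pi_apply i)
  have h2 := h.comp (φ := fun z => z) (ψ := fun (z : U → X) (i : s) => z ⟨i + n, hU i⟩)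
    measurable_id (by fun_prop)
  have h3 := h2.measure_inter_preimage_eq_mul S S hS hS
  have e : ((fun (y : ℤ → X) (n : ℤ) => y (n + 1))^[n]) ⁻¹' cylinder s S =
      ((fun (z : U → X) (i : s) => z ⟨i + n, hU i⟩) ∘ fun (a : ℤ → X) (i : U) => a i) ⁻¹' S := by
    ext y
    simp only [Set.mem_preimage, mem_cylinder]
    have : s.restrict (((fun (y : ℤ → X) (n : ℤ) => y (n + 1))^[n]) y) =
      fun i : s => y (i + n) := by
      ext i
      simp [bern_iterate]
    rw [this]
    rfl
  rw [e]
  exact h3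

/-- The Bernoulli shift `(T y) n = y (n + 1)` on the product space
`ℤ → X`, equipped with the product probability measure `ν` of countably many copies of
`μ` (characterised by its values on cylinder sets), is measure-preserving and
ergodic. -/
theorem bernoulli_shift_ergodic
    {X : Type*} [MeasurableSpace X] (μ : Measure X) [IsProbabilityMeasure μ]
    (ν : Measure (ℤ → X)) [IsProbabilityMeasure ν]
    (hν : ∀ (s : Finset ℤ) (t : ℤ → Set X), (∀ i ∈ s, MeasurableSet (t i)) →
      ν {y | ∀ i ∈ s, y i ∈ t i} = ∏ i ∈ s, μ (t i)) :
    MeasurePreserving (fun (y : ℤ → X) (n : ℤ) => y (n + 1)) ν ν ∧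
    Ergodic (fun (y : ℤ → X) (n : ℤ) => y (n + 1)) ν := by
  have hνe : ν = Measure.infinitePi (fun _ : ℤ => μ) :=
    Measure.eq_infinitePi (μ := fun _ : ℤ => μ) (fun s t ht => hν s t (fun i _ => ht i))
  have hmp : MeasurePreserving (fun (y : ℤ → X) (n : ℤ) => y (n + 1)) ν ν := by
    refine ⟨by fun_prop, ?_⟩
    rw [hνe]
    exact Measure.map_infinitePi_infinitePi_of_inj (P := fun _ : ℤ => μ)
      (f := fun n : ℤ => n + 1) (add_left_injective 1)
  refine ⟨hmp, hmp, ⟨fun A hA hinv => ?_⟩⟩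
  have key : ∀ ε : ℝ, 0 < ε → |ν.real A - ν.real A * ν.real A| ≤ 4 * ε := by
    intro ε hε
    obtain ⟨C, hC, hCA⟩ := exists_measure_symmDiff_lt_of_generateFrom_isSetRing (μ := ν)
      (C := measurableCylinders (fun _ : ℤ => X)) isSetRing_measurableCylinders
      ⟨{Set.univ}, Set.countable_singleton _,
        by simpa using univ_mem_measurableCylinders (fun _ : ℤ => X), by simp⟩
      generateFrom_measurableCylinders.symm hA (ENNReal.ofReal_pos.2 hε)
    have hCm := MeasurableSet.of_mem_measurableCylinders hC
    obtain ⟨s, S, hS, rfl⟩ := (mem_measurableCylinders _).1 hC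
    obtain ⟨n, hn⟩ := bern_indep μ s S hS
    rw [← hνe] at hn
    set C : Set (ℤ → X) := cylinder (α := fun _ : ℤ => X) s S
    set T := (fun (y : ℤ → X) (n : ℤ) => y (n + 1))
    have hTn := hmp.iterate n
    have hAn : T^[n] ⁻¹' A = A := by
      rw [Set.preimage_iterate_eq]
      exact Function.iterate_fixed hinv n
    have hCA' : ν.real (symmDiff C A) ≤ ε :=
      ENNReal.toReal_le_of_le_ofReal hε.le hCA.le
    have hTC : ν.real (T^[n] ⁻¹' C) = ν.real C := by
      simp only [measureReal_def, hTn.measure_preimage hCm.nullMeasurableSet]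
    have hTCA : ν.real (symmDiff (T^[n] ⁻¹' C) A) ≤ ε := by
      have : symmDiff (T^[n] ⁻¹' C) A = T^[n] ⁻¹' (symmDiff C A) := by
        conv_lhs => rw [← hAn]
        rfl
      rw [this, measureReal_def, hTn.measure_preimage (hCm.symmDiff hA).nullMeasurableSet]
      exact hCA'
    have hn' : ν.real (C ∩ T^[n] ⁻¹' C) = ν.real C * ν.real C := by
      rw [measureReal_def, hn, ENNReal.toReal_mul]
      exact congrArg (ν.real C * ·) hTC
    have hsub : symmDiff (C ∩ T^[n] ⁻¹' C) A ⊆ symmDiff C A ∪ symmDiff (T^[n] ⁻¹' C) A := by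
      intro x hx
      simp only [Set.mem_symmDiff, Set.mem_union, Set.mem_inter_iff] at hx ⊢
      tauto
    have h1 : ν.real (symmDiff (C ∩ T^[n] ⁻¹' C) A) ≤ ε + ε :=
      (measureReal_mono hsub).trans ((measureReal_union_le _ _).trans (add_le_add hCA' hTCA))
    have h2 := (abs_measureReal_sub_le_measureReal_symmDiff (μ := ν)
      (hCm.inter (hTn.measurable hCm)).nullMeasurableSet hA.nullMeasurableSet).trans h1
    have h3 := (abs_measureReal_sub_le_measureReal_symmDiff (μ := ν)
      hCm.nullMeasurableSet hA.nullMeasurableSet).trans hCA'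
    rw [hn'] at h2
    have a0 : 0 ≤ ν.real A := measureReal_nonneg
    have a1 : ν.real A ≤ 1 := measureReal_le_one
    have c0 : 0 ≤ ν.real C := measureReal_nonneg
    have c1 : ν.real C ≤ 1 := measureReal_le_one
    rw [abs_le] at *
    constructor <;> nlinarith
  have h0 : ν.real A - ν.real A * ν.real A = 0 := by
    rw [← abs_eq_zero]
    refine le_antisymm (le_of_forall_pos_le_add fun ε hε => ?_) (abs_nonneg _)
    have := key (ε / 4) (by positivity)
    linarith
  have h1 : ν.real A = 0 ∨ ν.real A = 1 := by
    have : ν.real A * (1 - ν.real A) = 0 := by linarith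
    rcases mul_eq_zero.1 this with h | h
    · exact Or.inl h
    · exact Or.inr (by linarith)
  rw [Filter.eventuallyConst_set']
  rcases h1 with h | h
  · left
    rw [measureReal_eq_zero_iff] at h
    exact ae_eq_empty.2 h
  · right
    rw [ae_eq_univ, prob_compl_eq_zero_iff hA]
    rw [measureReal_def, ENNReal.toReal_eq_one_iff] at h
    exact h
end

section
/- Let X be a measurable space equipped with a probability measure μ, let ν be the product probability measure on Y = (ℤ → X), and let d ≥ 1 be a natural number. Then the diagonal shift map on Fin d → Y, sending (y₁,…,y_d) to (T y₁,…,T y_d) where (T y)(n) = y(n + 1), is measure-preserving and ergodic with respect to the product measure ν^d on Fin d → Y. -/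
open MeasureTheory

open scoped symmDiff in
/-- A measure-preserving map which makes every set of a generating ring independent from one of
its iterated preimages is ergodic. -/
lemma ergodic_of_ring_indep {Ω : Type*} [mΩ : MeasurableSpace Ω] (P : Measure Ω)
    [IsProbabilityMeasure P] {f : Ω → Ω} (hf : MeasurePreserving f P P) (C : Set (Set Ω))
    (hC : IsSetRing C) (hu : Set.univ ∈ C) (hgen : mΩ = MeasurableSpace.generateFrom C)
    (hind : ∀ t ∈ C, ∃ n : ℕ, P.real (t ∩ f^[n] ⁻¹' t) = P.real t * P.real t) :
    Ergodic f P := by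
  refine ⟨hf, ⟨fun s hs hfs => ?_⟩⟩
  have key : ∀ ε : ℝ, 0 < ε → |P.real s - P.real s * P.real s| ≤ 4 * ε := by
    intro ε hε
    obtain ⟨t, htC, ht⟩ := exists_measure_symmDiff_lt_of_generateFrom_isSetRing (μ := P) hC
      ⟨{Set.univ}, Set.countable_singleton _, by simpa using hu, by simp⟩ hgen hs
      (ENNReal.ofReal_pos.2 hε)
    have htm : MeasurableSet t := by
      rw [hgen]; exact MeasurableSpace.measurableSet_generateFrom htC
    have ht' : P.real (t ∆ s) ≤ ε := by
      rw [Measure.real]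
      exact ENNReal.toReal_le_of_le_ofReal hε.le ht.le
    obtain ⟨n, hn⟩ := hind t htC
    have hfn := hf.iterate n
    have hsn : f^[n] ⁻¹' s = s := Function.IsFixedPt.preimage_iterate hfs n
    have h1 : |P.real t - P.real s| ≤ ε :=
      (abs_measureReal_sub_le_measureReal_symmDiff htm.nullMeasurableSet
        hs.nullMeasurableSet).trans ht'
    have h2 : |P.real (t ∩ f^[n] ⁻¹' t) - P.real s| ≤ 2 * ε := by
      refine (abs_measureReal_sub_le_measureReal_symmDiff
        (htm.inter (hfn.measurable htm)).nullMeasurableSet hs.nullMeasurableSet).trans ?_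
      have hsub : (t ∩ f^[n] ⁻¹' t) ∆ s ⊆ t ∆ s ∪ f^[n] ⁻¹' (t ∆ s) := by
        intro x hx
        have hx' : f^[n] x ∈ s ↔ x ∈ s := by
          rw [← Set.mem_preimage, hsn]
        simp only [Set.mem_symmDiff, Set.mem_union, Set.mem_inter_iff, Set.mem_preimage] at hx ⊢
        tauto
      have h3 : P.real (f^[n] ⁻¹' (t ∆ s)) = P.real (t ∆ s) := by
        rw [Measure.real, Measure.real,
          hfn.measure_preimage (htm.symmDiff hs).nullMeasurableSet]
      have := (measureReal_mono hsub (measure_ne_top P _)).trans (measureReal_union_le _ _)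
      linarith
    rw [hn] at h2
    have b1 : P.real s ≤ 1 := measureReal_le_one
    have b2 : P.real t ≤ 1 := measureReal_le_one
    have b3 : 0 ≤ P.real s := measureReal_nonneg
    have b4 : 0 ≤ P.real t := measureReal_nonneg
    rw [abs_le] at *
    constructor <;> nlinarith
  have h0 : P.real s - P.real s * P.real s = 0 := by
    by_contra h
    have hp := abs_pos.2 h
    have := key (|P.real s - P.real s * P.real s| / 8) (by positivity)
    linarith
  have h01 : P.real s = 0 ∨ P.real s = 1 := by
    have : P.real s * (1 - P.real s) = 0 := by linarith
    rcases mul_eq_zero.1 this with h | h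
    · exact Or.inl h
    · exact Or.inr (by linarith)
  rw [Filter.eventuallyConst_set']
  rcases h01 with h | h
  · left
    rw [measureReal_eq_zero_iff] at h
    exact ae_eq_empty.2 h
  · right
    rw [ae_eq_univ, prob_compl_eq_zero_iff hs]
    rw [Measure.real, ENNReal.toReal_eq_one_iff] at h
    exact h

/-- The shift on `(ι × ℤ) → X` is ergodic for the product measure. -/
lemma ergodic_prod_shift {ι X : Type*} [MeasurableSpace X] (μ : Measure X)
    [IsProbabilityMeasure μ] :
    Ergodic (fun (y : ι × ℤ → X) (p : ι × ℤ) => y (p.1, p.2 + 1))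
      (Measure.infinitePi fun _ : ι × ℤ => μ) := by
  classical
  set f : (ι × ℤ → X) → (ι × ℤ → X) := fun y p => y (p.1, p.2 + 1) with hfdef
  have hf : MeasurePreserving f (Measure.infinitePi fun _ : ι × ℤ => μ)
      (Measure.infinitePi fun _ : ι × ℤ => μ) := by
    refine ⟨by fun_prop, ?_⟩
    exact Measure.map_infinitePi_infinitePi_of_inj (P := fun _ : ι × ℤ => μ)
      (f := fun p : ι × ℤ => (p.1, p.2 + 1)) (by
        rintro ⟨a, b⟩ ⟨c, e⟩ h
        simpa using h)
  have hit : ∀ (n : ℕ) (y : ι × ℤ → X) (p : ι × ℤ), f^[n] y p = y (p.1, p.2 + n) := by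
    intro n
    induction n with
    | zero => intro y p; simp
    | succ k ih =>
      intro y p
      rw [Function.iterate_succ_apply, ih]
      simp only [hfdef]
      congr 2
      push_cast
      ring
  refine ergodic_of_ring_indep _ hf (measurableCylinders fun _ : ι × ℤ => X)
    isSetRing_measurableCylinders (univ_mem_measurableCylinders _)
    generateFrom_measurableCylinders.symm ?_
  intro t ht
  obtain ⟨I, S, hS, rfl⟩ := (mem_measurableCylinders t).1 ht
  obtain ⟨N, hN⟩ : ∃ N : ℕ, ∀ p ∈ I, p.2.natAbs ≤ N :=
    ⟨I.sup fun p => p.2.natAbs, fun p hp => Finset.le_sup (f := fun p : ι × ℤ => p.2.natAbs) hp⟩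
  let n := 2 * N + 1
  let g : ι × ℤ → ι × ℤ := fun p => (p.1, p.2 + n)
  have hdisj : Disjoint I (I.image g) := by
    rw [Finset.disjoint_left]
    intro p hp hq
    obtain ⟨q, hq2, rfl⟩ := Finset.mem_image.1 hq
    have h1 := hN _ hp
    have h2 := hN _ hq2
    simp only [g, n] at h1
    push_cast at h1
    omega
  have hI := (ProbabilityTheory.iIndepFun_infinitePi (P := fun _ : ι × ℤ => μ)
    (X := fun _ x => x) (fun _ => measurable_id)).indepFun_finset I (I.image g) hdisj
    (fun p => by fun_prop)
  let φ : (I.image g → X) → (I → X) := fun y i => y ⟨g i, Finset.mem_image_of_mem g i.2⟩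
  have hφ : Measurable φ := by fun_prop
  have hpre : f^[n] ⁻¹' (cylinder I S) =
      (fun (a : ι × ℤ → X) (i : I.image g) => a i) ⁻¹' (φ ⁻¹' S) := by
    ext y
    simp only [Set.mem_preimage, mem_cylinder]
    have : I.restrict (f^[n] y) = φ fun i => y i := by
      ext i
      simp [hit, φ, g]
    rw [this]
  have hprod := hI.measure_inter_preimage_eq_mul S (φ ⁻¹' S) hS (hφ hS)
  refine ⟨n, ?_⟩
  have hmeq := (hf.iterate n).measure_preimage
    (MeasurableSet.cylinder I hS).nullMeasurableSet
  rw [← hpre, hmeq] at hprod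
  rw [Measure.real, Measure.real, ← ENNReal.toReal_mul]
  exact congrArg ENNReal.toReal hprod



/-- For every `d ≥ 1`, the diagonal Bernoulli shift on `d` copies of
the product space `Y = (ℤ → X)`, equipped with the `d`-fold product of the Bernoulli
measure `ν` (itself characterised by its values on cylinder sets), is
measure-preserving and ergodic. -/
theorem diagonal_bernoulli_shift_ergodic
    {X : Type*} [MeasurableSpace X] (μ : Measure X) [IsProbabilityMeasure μ]
    (ν : Measure (ℤ → X)) [IsProbabilityMeasure ν]
    (hν : ∀ (s : Finset ℤ) (t : ℤ → Set X), (∀ i ∈ s, MeasurableSet (t i)) →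
      ν {y | ∀ i ∈ s, y i ∈ t i} = ∏ i ∈ s, μ (t i))
    (d : ℕ) (hd : 1 ≤ d) :
    MeasurePreserving (fun (y : Fin d → ℤ → X) (i : Fin d) (n : ℤ) => y i (n + 1))
      (Measure.pi fun _ : Fin d => ν) (Measure.pi fun _ : Fin d => ν) ∧
    Ergodic (fun (y : Fin d → ℤ → X) (i : Fin d) (n : ℤ) => y i (n + 1))
      (Measure.pi fun _ : Fin d => ν) := by
  suffices h : Ergodic (fun (y : Fin d → ℤ → X) (i : Fin d) (n : ℤ) => y i (n + 1))
      (Measure.pi fun _ : Fin d => ν) from ⟨h.toMeasurePreserving, h⟩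
  have hνeq : ν = Measure.infinitePi fun _ : ℤ => μ := by
    refine Measure.eq_infinitePi _ fun s t ht => ?_
    exact hν s t fun i _ => ht i
  have hmp : MeasurePreserving (MeasurableEquiv.curry (Fin d) ℤ X)
      (Measure.infinitePi fun _ : Fin d × ℤ => μ) (Measure.pi fun _ : Fin d => ν) := by
    refine ⟨(MeasurableEquiv.curry (Fin d) ℤ X).measurable, ?_⟩
    rw [← Measure.infinitePi_eq_pi, hνeq]
    exact Measure.infinitePi_map_curry fun _ _ => μ
  refine hmp.ergodic_of_ergodic_semiconj (ergodic_prod_shift μ) (by fun_prop) ?_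
  intro y
  rfl
end

section
/- Let G be a countable group acting measurably on a measurable space X equipped with a probability measure μ, such that the action of each g ∈ G is quasi-measure-preserving (the pushforward of μ by x ↦ g•x is absolutely continuous with respect to μ, and conversely). Assume the diagonal action of G on X × X is ergodic, i.e. every measurable subset s ⊆ X × X with (g•x, g•x') ∈ s ⟺ (x,x') ∈ s for all g ∈ G is null or conull for μ × μ. Let E be a separable real Banach space equipped with an action of G by linear isometries, and let f : X → E be a measurable map which is G-equivariant: for each g ∈ G, f(g•x) = g•f(x) for μ-almost every x. Then there exists c ∈ E with g•c = c for all g ∈ G and f(x) = c for μ-almost every x. -/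
open MeasureTheory

/-- Ergodicity with coefficients: if a countable group `G` acts
measurably and quasi-measure-preservingly on a probability space `(X,μ)` with the
diagonal action on `X × X` ergodic, then every `G`-equivariant measurable map from `X`
to a separable Banach `G`-module `E` is essentially constant, equal to a `G`-fixed
vector. -/
theorem equivariant_map_essentially_constant
    {G : Type*} [Group G] [Countable G]
    {X : Type*} [MeasurableSpace X] (μ : Measure X) [IsProbabilityMeasure μ]
    [MulAction G X]
    (hmeas : ∀ g : G, Measurable fun x : X => g • x)
    (hqmp : ∀ g : G, Measure.map (fun x : X => g • x) μ ≪ μ ∧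
      μ ≪ Measure.map (fun x : X => g • x) μ)
    (herg : ∀ s : Set (X × X), MeasurableSet s →
      (∀ (g : G) (x x' : X), (g • x, g • x') ∈ s ↔ (x, x') ∈ s) →
      (μ.prod μ) s = 0 ∨ (μ.prod μ) sᶜ = 0)
    {E : Type*} [NormedAddCommGroup E] [NormedSpace ℝ E] [CompleteSpace E]
    [TopologicalSpace.SeparableSpace E] [MeasurableSpace E] [BorelSpace E]
    (π : G →* (E ≃ₗᵢ[ℝ] E))
    (f : X → E) (hf : Measurable f)
    (hequiv : ∀ g : G, ∀ᵐ x ∂μ, f (g • x) = π g (f x)) :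
    ∃ c : E, (∀ g : G, π g c = c) ∧ ∀ᵐ x ∂μ, f x = c := by
  haveI : SecondCountableTopology E := UniformSpace.secondCountable_of_separable E
  have key : ∀ r : ℝ, 0 < r → ∀ᵐ p ∂(μ.prod μ), dist (f p.1) (f p.2) < r := by
    intro r hr
    let s : Set (X × X) := {p | ∀ h : G, dist (f (h • p.1)) (f (h • p.2)) < r}
    have hs : MeasurableSet s := by
      have : s = ⋂ h : G, {p : X × X | dist (f (h • p.1)) (f (h • p.2)) < r} := by
        ext p; simp [s]
      rw [this]
      refine MeasurableSet.iInter fun h => ?_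
      have h1 : Measurable fun p : X × X => f (h • p.1) :=
        hf.comp ((hmeas h).comp measurable_fst)
      have h2 : Measurable fun p : X × X => f (h • p.2) :=
        hf.comp ((hmeas h).comp measurable_snd)
      exact measurableSet_lt (h1.dist h2) measurable_const
    have hinv : ∀ (g : G) (x x' : X), (g • x, g • x') ∈ s ↔ (x, x') ∈ s := by
      intro g x x'
      constructor
      · intro H h
        have := H (h * g⁻¹)
        simpa [smul_smul] using this
      · intro H h
        have := H (h * g)
        simpa [smul_smul] using this
    rcases herg s hs hinv with h0 | h0
    · exfalso
      have hall : ∀ᵐ x ∂μ, ∀ g : G, f (g • x) = π g (f x) := ae_all_iff.2 hequiv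
      have hball : ∀ c : E, ∀ᵐ x ∂μ, f x ∉ Metric.ball c (r / 2) := by
        intro c
        let A : Set X := {x | f x ∈ Metric.ball c (r / 2) ∧ ∀ g : G, f (g • x) = π g (f x)}
        have hA : A ×ˢ A ⊆ s := by
          rintro ⟨x, y⟩ ⟨⟨hx, hx'⟩, ⟨hy, hy'⟩⟩ h
          simp only at hx hx' hy hy' ⊢
          rw [hx' h, hy' h, (π h).dist_map]
          rw [Metric.mem_ball] at hx hy
          have := dist_triangle_right (f x) (f y) c
          linarith
        have hA0 : μ A = 0 := by
          have := measure_mono_null hA h0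
          rw [Measure.prod_prod] at this
          exact mul_self_eq_zero.1 this
        have hA1 : ∀ᵐ x ∂μ, x ∉ A := measure_eq_zero_iff_ae_notMem.1 hA0
        filter_upwards [hall, hA1] with x h1 h2 h3
        exact h2 ⟨h3, h1⟩
      have hd := ae_all_iff.2 fun n : ℕ => hball (TopologicalSpace.denseSeq E n)
      obtain ⟨x, hx⟩ := hd.exists
      obtain ⟨n, hn⟩ := (TopologicalSpace.denseRange_denseSeq E).exists_dist_lt (f x) (half_pos hr)
      exact hx n hn
    · have : ∀ᵐ p ∂(μ.prod μ), p ∈ s := h0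
      filter_upwards [this] with p hp
      simpa using hp 1
  have hprod : ∀ᵐ p ∂(μ.prod μ), f p.1 = f p.2 := by
    have := ae_all_iff.2 fun n : ℕ => key (1 / ((n : ℝ) + 1)) (by positivity)
    filter_upwards [this] with p hp
    by_contra hne
    obtain ⟨n, hn⟩ := exists_nat_one_div_lt (dist_pos.2 hne)
    exact lt_asymm hn (hp n)
  obtain ⟨x₀, hx₀⟩ := (Measure.ae_ae_of_ae_prod hprod).exists
  have hc : ∀ᵐ x ∂μ, f x = f x₀ := by
    filter_upwards [hx₀] with y hy using hy.symm
  refine ⟨f x₀, fun g => ?_, hc⟩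
  have hg : ∀ᵐ x ∂μ, f (g • x) = f x₀ :=
    ae_of_ae_map (hmeas g).aemeasurable ((hqmp g).1.ae_le hc)
  obtain ⟨x, h1, h2, h3⟩ := (hc.and (hg.and (hequiv g))).exists
  rw [← h1, ← h3, h2, h1]
end

section
/- Let G be a group acting faithfully on a set Z, let Z₀ ⊆ Z, and let G₀ = {h ∈ G | h fixes every point of Z outside Z₀}. Let g ∈ G be such that (g^p • Z₀) ∩ Z₀ = ∅ for every integer p ≥ 1. Then for all integers p ≠ q, every element of g^p G₀ g^{−p} commutes with every element of g^q G₀ g^{−q}; that is, for all a, b ∈ G₀, (g^p a g^{−p})(g^q b g^{−q}) = (g^q b g^{−q})(g^p a g^{−p}). -/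
theorem commute_of_disjoint_aux {G Z : Type*} [Group G] [MulAction G Z] [FaithfulSMul G Z]
    (x y : G) (h : ∀ z : Z, x • z = z ∨ y • z = z) : x * y = y * x := by
  apply FaithfulSMul.eq_of_smul_eq_smul (α := Z)
  intro z
  rw [mul_smul, mul_smul]
  rcases h z with hx | hy
  · rw [hx]
    rcases h (y • z) with h1 | h1
    · exact h1
    · have h2 : y • z = z := smul_left_cancel y h1
      rw [h2, hx]
  · rw [hy]
    rcases h (x • z) with h1 | h1
    · have h2 : x • z = z := smul_left_cancel x h1
      rw [h2, hy]
    · exact h1.symm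

open Pointwise in
/-- If `G` acts faithfully on `Z`, the subgroup `G₀` of elements
supported in `Z₀ ⊆ Z` has the property that its conjugates by distinct powers of an
element `g` with `g^p • Z₀ ∩ Z₀ = ∅` for all `p ≥ 1` commute pairwise. -/
theorem commuting_conjugates_of_disjoint_supports
    {G Z : Type*} [Group G] [MulAction G Z] [FaithfulSMul G Z]
    (Z₀ : Set Z) (g : G)
    (hdisj : ∀ p : ℤ, 1 ≤ p → Disjoint (g ^ p • Z₀) Z₀)
    (p q : ℤ) (hpq : p ≠ q) (a b : G)
    (ha : ∀ z : Z, z ∉ Z₀ → a • z = z) (hb : ∀ z : Z, z ∉ Z₀ → b • z = z) :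
    (g ^ p * a * g ^ (-p)) * (g ^ q * b * g ^ (-q)) =
    (g ^ q * b * g ^ (-q)) * (g ^ p * a * g ^ (-p)) := by
  have key : ∀ m n : ℤ, m < n → ∀ z : Z, g ^ (-m) • z ∈ Z₀ → g ^ (-n) • z ∈ Z₀ → False := by
    intro m n hmn z hm hn
    refine Set.disjoint_left.mp (hdisj (n - m) (by omega)) ?_ hm
    refine ⟨g ^ (-n) • z, hn, ?_⟩
    change g ^ (n - m) • g ^ (-n) • z = g ^ (-m) • z
    rw [← mul_smul, ← zpow_add]
    congr 2
    ring
  have fix : ∀ (c : G) (n : ℤ) (z : Z), (∀ z : Z, z ∉ Z₀ → c • z = z) → g ^ (-n) • z ∉ Z₀ →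
      (g ^ n * c * g ^ (-n)) • z = z := by
    intro c n z hc hz
    rw [mul_smul, mul_smul, hc _ hz, ← mul_smul, ← zpow_add]
    simp
  apply commute_of_disjoint_aux (Z := Z)
  intro z
  by_cases h1 : g ^ (-p) • z ∈ Z₀
  · by_cases h2 : g ^ (-q) • z ∈ Z₀
    · rcases lt_or_gt_of_ne hpq with h | h
      · exact (key p q h z h1 h2).elim
      · exact (key q p h z h2 h1).elim
    · exact Or.inr (fix b q z hb h2)
  · exact Or.inl (fix a p z ha h1)
end
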